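/- arXiv:1708.02529 — 2 statements merged into one kernel-verified Lean document; each statement's English description precedes it below -/
import Mathlib

section
/- Let f be a minimal volume-preserving homeomorphism of T², isotopic to the identity, regularly semi-conjugate to the translation T_ω̄ with ω̄ ∈ ℝ²/ℤ² totally irrational, and let G⁰_f be the set of centralizers of f in Homeo(T², Vol) ∩ Homeo_*(T²). Then G⁰_f is isomorphic (as a group) to a subgroup of ℝ²/ℤ², and G⁰_f is compact in the C⁰ topology if and only if f is topologically linearizable. -/
open Filter Topology MeasureTheory

noncomputable section

/-- The plane ℝ². -/
abbrev R2 : Type := ℝ × ℝ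

/-- The Euclidean norm on ℝ². -/
def enorm2 (v : R2) : ℝ := Real.sqrt (v.1 ^ 2 + v.2 ^ 2)

/-- The two-torus 𝕋² = ℝ²/ℤ². -/
abbrev T2 : Type := AddCircle (1 : ℝ) × AddCircle (1 : ℝ)

/-- The covering projection π : ℝ² → 𝕋². -/
def pr2 (v : R2) : T2 := ((v.1 : AddCircle (1 : ℝ)), (v.2 : AddCircle (1 : ℝ)))

/-- The integer vector (v₁, v₂) regarded as a point of ℝ². -/
def intVec (v : ℤ × ℤ) : R2 := ((v.1 : ℝ), (v.2 : ℝ))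

/-- The distance on 𝕋² induced by the Euclidean metric on ℝ². -/
def distT2 (x y : T2) : ℝ :=
  sInf {r | ∃ a b : R2, pr2 a = x ∧ pr2 b = y ∧ r = enorm2 (a - b)}

/-- The C⁰ distance between two maps of 𝕋². -/
def dC0 (f g : T2 → T2) : ℝ := ⨆ x : T2, distT2 (f x) (g x)

/-- `F : ℝ² → ℝ²` is a lift of `f : 𝕋² → 𝕋²`, i.e. π ∘ F = f ∘ π. -/
def IsLift (F : R2 → R2) (f : T2 → T2) : Prop := ∀ z : R2, pr2 (F z) = f (pr2 z)

/-- `F` commutes with the deck transformations of π : ℝ² → 𝕋². -/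
def Equivariant (F : R2 → R2) : Prop :=
  ∀ (z : R2) (v : ℤ × ℤ), F (z + intVec v) = F z + intVec v

/-- `f` is a homeomorphism of 𝕋² isotopic to the identity (equivalently, admitting an
equivariant lift to ℝ²). -/
def IsotopicToId (f : T2 → T2) : Prop :=
  IsHomeomorph f ∧ ∃ F : R2 → R2, IsHomeomorph F ∧ IsLift F f ∧ Equivariant F

/-- The Misiurewicz–Ziemian rotation set of a lift `F`. -/
def rotSet (F : R2 → R2) : Set R2 :=
  {v | ∃ (z : ℕ → R2) (n : ℕ → ℕ), Tendsto n atTop atTop ∧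
      Tendsto (fun i => ((n i : ℝ))⁻¹ • (F^[n i] (z i) - z i)) atTop (𝓝 v)}

/-- Bounded mean motion, with bound κ, for a lift `F` with rotation vector `ω`:
‖Fⁿ(z) − z − nω‖ ≤ κ for all z and n. -/
def BoundedMeanMotion (F : R2 → R2) (ω : R2) (κ : ℝ) : Prop :=
  ∀ (z : R2) (n : ℕ), enorm2 (F^[n] z - z - (n : ℝ) • ω) ≤ κ

/-- The standard scalar product on ℝ². -/
def inner2 (u v : R2) : ℝ := u.1 * v.1 + u.2 * v.2

/-- v^⊥ = (−v₂, v₁)/‖v‖. -/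
def perp2 (v : R2) : R2 := (-v.2 / enorm2 v, v.1 / enorm2 v)

/-- Bounded deviation parallel to `v`, with bound κ, for a lift `F` with rotation vector `ω`:
|⟨Fⁿ(z) − z − nω, v^⊥⟩| ≤ κ for all z and n. -/
def BoundedDeviation (F : R2 → R2) (ω : R2) (v : R2) (κ : ℝ) : Prop :=
  ∀ (z : R2) (n : ℕ), |inner2 (F^[n] z - z - (n : ℝ) • ω) (perp2 v)| ≤ κ

/-- ‖ω‖_{𝕋²} = min over integer vectors z of ‖ω − z‖. -/
def normT2 (ω : R2) : ℝ := ⨅ v : ℤ × ℤ, enorm2 (ω - intVec v)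

/-- The super-Liouvillean condition: liminf_{n→∞} n⁻¹ ln ‖nω‖_{𝕋²} = −∞. -/
def SuperLiouville (ω : R2) : Prop :=
  ∀ M : ℝ, ∃ᶠ n : ℕ in atTop, (n : ℝ)⁻¹ * Real.log (normT2 ((n : ℝ) • ω)) < M

/-- The strong super-Liouvillean condition: liminf_{n→∞} n⁻¹ aⁿ ln ‖nω‖_{𝕋²} = −∞. -/
def StrongSuperLiouville (a : ℝ) (ω : R2) : Prop :=
  ∀ M : ℝ, ∃ᶠ n : ℕ in atTop, (n : ℝ)⁻¹ * a ^ n * Real.log (normT2 ((n : ℝ) • ω)) < M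

/-- ω ∈ ℝ² is irrational if ω ∉ ℚ². -/
def IrrationalVec (ω : R2) : Prop := ¬ ∃ q : ℚ × ℚ, ω = ((q.1 : ℝ), (q.2 : ℝ))

/-- ω is totally irrational if ω₁, ω₂, 1 are rationally independent. -/
def TotallyIrrationalVec (ω : R2) : Prop :=
  ∀ d1 d2 e : ℤ, (d1 : ℝ) * ω.1 + (d2 : ℝ) * ω.2 + (e : ℝ) = 0 → d1 = 0 ∧ d2 = 0 ∧ e = 0

/-- ω is semi-irrational: irrational but not totally irrational. -/
def SemiIrrationalVec (ω : R2) : Prop := IrrationalVec ω ∧ ¬ TotallyIrrationalVec ω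

/-- `v` is a character vector of the semi-irrational vector ω. -/
def IsCharacterVector (ω : R2) (v : R2) : Prop :=
  ∃ c d : ℤ, Int.gcd c d = 1 ∧ (∃ e : ℚ, (c : ℝ) * ω.1 + (d : ℝ) * ω.2 + (e : ℝ) = 0) ∧
    v = ((d : ℝ), (-c : ℝ))

/-- `f` is Hölder continuous with exponent `a`. -/
def HolderMap (a : ℝ) (f : T2 → T2) : Prop :=
  ∃ C : ℝ, ∀ x y : T2, distT2 (f x) (f y) ≤ C * distT2 x y ^ a

/-- C⁰-rigidity: liminf_{n→∞} d_{C⁰}(fⁿ, Id) = 0. -/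
def C0Rigid (f : T2 → T2) : Prop :=
  ∀ ε : ℝ, 0 < ε → ∃ᶠ n : ℕ in atTop, dC0 (f^[n]) id < ε

/-- `f` is a C^r diffeomorphism of 𝕋², expressed via a C^r lift with a C^r inverse. -/
def IsCrDiffeo (r : ℕ∞) (f : T2 → T2) : Prop :=
  ∃ F G : R2 → R2, IsLift F f ∧ Function.LeftInverse G F ∧ Function.RightInverse G F ∧
    ContDiff ℝ r F ∧ ContDiff ℝ r G

/-- C^k-rigidity: some sequence of iterates f^{n_j}, n_j → ∞, converges to the identity in the
C^k topology, i.e. admits lifts converging to the identity uniformly together with all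
derivatives of order ≤ k. -/
def CkRigid (k : ℕ∞) (f : T2 → T2) : Prop :=
  ∃ n : ℕ → ℕ, Tendsto n atTop atTop ∧
    ∃ F : ℕ → R2 → R2, (∀ j, IsLift (F j) (f^[n j])) ∧
      ∀ i : ℕ, (i : ℕ∞) ≤ k →
        Tendsto (fun j => ⨆ z : R2, ‖iteratedFDeriv ℝ i (fun w => F j w - w) z‖)
          atTop (𝓝 0)

/-- ‖x‖_𝕋 : the distance from x ∈ ℝ to the nearest integer. -/
def dT (x : ℝ) : ℝ := |x - round x|

/-- `q` is the sequence of denominators of the best rational approximations of β. -/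
def BestDenomSeq (β : ℝ) (q : ℕ → ℕ) : Prop :=
  q 0 = 1 ∧ ∀ n : ℕ,
    q n < q (n + 1) ∧
    (∀ m : ℕ, 1 ≤ m → m < q (n + 1) → dT ((q n : ℝ) * β) ≤ dT ((m : ℝ) * β)) ∧
    dT ((q n : ℝ) * β) < 1 / (q (n + 1) : ℝ)

/-- β is of non-Brjuno type: Σ_n (ln q_{n+1})/q_n = ∞. -/
def NonBrjunoNum (β : ℝ) : Prop :=
  ∀ q : ℕ → ℕ, BestDenomSeq β q → ¬ Summable fun n => Real.log (q (n + 1) : ℝ) / (q n : ℝ)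

/-- Character data of a semi-irrational vector ω: (c,d) ∈ ℤ² with gcd(c,d)=1 and
e = p/q ∈ ℚ in lowest terms with q > 0 such that c ω₁ + d ω₂ + p/q = 0. -/
def IsCharData (ω : R2) (c d p q : ℤ) : Prop :=
  Int.gcd c d = 1 ∧ Int.gcd p q = 1 ∧ 0 < q ∧
    (c : ℝ) * ω.1 + (d : ℝ) * ω.2 + (p : ℝ) / (q : ℝ) = 0

/-- ω is of strong non-Brjuno type: its character frequency 𝓕(ω̄) is of non-Brjuno type. -/
def StrongNonBrjuno (ω : R2) : Prop :=
  ∃ c d p q a b : ℤ, IsCharData ω c d p q ∧ a * d - b * c = 1 ∧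
    NonBrjunoNum (dT ((q : ℝ) * ((a : ℝ) * ω.1 + (b : ℝ) * ω.2)))

/-- The linear action of the integer matrix [[a,b],[c,d]] on ℝ². -/
def AactZ (a b c d : ℤ) (z : R2) : R2 :=
  ((a : ℝ) * z.1 + (b : ℝ) * z.2, (c : ℝ) * z.1 + (d : ℝ) * z.2)

/-- The operator norm (w.r.t. the Euclidean norm) of the matrix [[a,b],[c,d]]. -/
def AOpNormZ (a b c d : ℤ) : ℝ :=
  sSup {r | ∃ u : R2, enorm2 u ≤ 1 ∧
    r = enorm2 ((a : ℝ) * u.1 + (b : ℝ) * u.2, (c : ℝ) * u.1 + (d : ℝ) * u.2)}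

/-- Membership in the class 𝒞_{κ,ω̄}: pseudo-rotations with rotation vector ω̄ mod ℤ²
having bounded mean motion with bound κ. -/
def MemC (κ : ℝ) (w : T2) (f : T2 → T2) : Prop :=
  IsotopicToId f ∧ ∃ (F : R2 → R2) (ω : R2),
    IsLift F f ∧ rotSet F = {ω} ∧ pr2 ω = w ∧ BoundedMeanMotion F ω κ

/-- Membership in the class 𝒟_{κ,ω̄,v}: pseudo-rotations with rotation vector ω̄ mod ℤ²
having bounded deviation parallel to v with bound κ. -/
def MemD (κ : ℝ) (w : T2) (v : R2) (f : T2 → T2) : Prop :=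
  IsotopicToId f ∧ ∃ (F : R2 → R2) (ω : R2),
    IsLift F f ∧ rotSet F = {ω} ∧ pr2 ω = w ∧ BoundedDeviation F ω v κ

/-- `h : 𝕋² → 𝕋²` is homotopic to the identity (characterised by admitting an equivariant
continuous lift). -/
def HomotopicToIdMap (h : T2 → T2) : Prop :=
  ∃ H : R2 → R2, Continuous H ∧ IsLift H h ∧ Equivariant H

/-- `f` is regularly semi-conjugate to the translation T_w : x ↦ x + w, i.e. semi-conjugate via
a continuous surjection homotopic to the identity. -/
def RegSemiConj (f : T2 → T2) (w : T2) : Prop :=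
  ∃ h : T2 → T2, Continuous h ∧ Function.Surjective h ∧ HomotopicToIdMap h ∧
    ∀ x : T2, h (f x) = h x + w

/-- `f` is topologically conjugate to a translation of 𝕋². -/
def TopLinearizable (f : T2 → T2) : Prop :=
  ∃ (w : T2) (h : T2 → T2), IsHomeomorph h ∧ ∀ x : T2, h (f x) = h x + w

/-- `f` is minimal: every orbit is dense. -/
def MinimalMap (f : T2 → T2) : Prop :=
  ∀ x : T2, Dense (Set.range fun n : ℕ => f^[n] x)

/-- The open ball in 𝕋² for the Euclidean-induced distance. -/
def ballT2 (z : T2) (r : ℝ) : Set T2 := {y | distT2 z y < r}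

/-- The diameter of a subset of 𝕋² for the Euclidean-induced distance. -/
def diamT2 (S : Set T2) : ℝ := sSup {r | ∃ x ∈ S, ∃ y ∈ S, r = distT2 x y}

/-- The Euclidean diameter of a subset of ℝ². -/
def diamE (S : Set R2) : ℝ := sSup {r | ∃ x ∈ S, ∃ y ∈ S, r = enorm2 (x - y)}

/-- `F` is a bounded (measurable) fundamental domain for the ℤ²-action on ℝ². -/
def IsBoundedFundDom (F : Set R2) : Prop :=
  MeasurableSet F ∧ Bornology.IsBounded F ∧
    (∀ x : R2, ∃ v : ℤ × ℤ, x - intVec v ∈ F) ∧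
    ∀ v : ℤ × ℤ, v ≠ 0 → F ∩ ((fun x => x + intVec v) '' F) = ∅

/-- `D` is an open topological disc in 𝕋². -/
def IsTopDisc (D : Set T2) : Prop :=
  IsOpen D ∧ Nonempty (D ≃ₜ Metric.ball (0 : R2) 1)

/-- `D` is simple with respect to the fundamental domain `F`: some connected component of
π⁻¹(D) is contained in `F`. -/
def IsSimpleDisc (D : Set T2) (F : Set R2) : Prop :=
  ∃ x ∈ pr2 ⁻¹' D, connectedComponentIn (pr2 ⁻¹' D) x ⊆ F

/-- `u` is the rotation vector of `g`, defined as the mean displacement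
∫_{𝕋²} (g̃(x̃) − x̃) dλ(x) mod ℤ² of an equivariant lift `G` of `g`. -/
def IsRotOf (g : T2 → T2) (u : T2) : Prop :=
  ∃ (G : R2 → R2) (Φ : T2 → R2), Continuous G ∧ IsLift G g ∧ Equivariant G ∧
    (∀ z : R2, Φ (pr2 z) = G z - z) ∧ u = pr2 (∫ x : T2, Φ x)

/-- The set Γ = ((ℚ×ℝ)/ℤ²) ∪ ((ℝ×ℚ)/ℤ²) of points of 𝕋² with at least one rational
coordinate. -/
def GammaSet : Set T2 :=
  {x | (∃ q : ℚ, x.1 = ((q : ℝ) : AddCircle (1 : ℝ))) ∨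
       (∃ q : ℚ, x.2 = ((q : ℝ) : AddCircle (1 : ℝ)))}

/-! A semi-conjugacy `h` to a translation turns every centralizer `g` of `f` into a translation,
`h (g x) = h x + (h (g 0) - h 0)`, which gives the homomorphism to `ℝ²/ℤ²`. It is injective because
`h ∘ g = h ∘ g'` forces `g` and `g'` to coincide somewhere, hence everywhere by minimality of `f`:
`k = g ∘ g'⁻¹` lifts to a plane homeomorphism `G` preserving a lift `H` of `h`. Poincaré recurrence
for `k` yields recurrence for `G`, since invariance of `H` excludes deck translations, and by
Brouwer's lemma a fixed-point-free plane homeomorphism at bounded distance from the identity has no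
recurrent point.

If the centralizer is compact, the orbit of `0` under it is closed and contains a dense orbit of
`f`, hence is everything, and `h` is injective. Conversely, if `f` is conjugate to a translation,
then its centralizer consists of the conjugates of all translations, a continuous image of the
torus. -/

/-! ### Branches of the logarithm -/

/-- `L` is a continuous branch of the logarithm of `u` on `K`. -/
structure IsLogOn {X : Type*} [TopologicalSpace X] (L u : X → ℂ) (K : Set X) : Prop where
  continuousOn : ContinuousOn L K
  exp_eq : ∀ x ∈ K, Complex.exp (L x) = u x

namespace IsLogOn

variable {X Y : Type*} [TopologicalSpace X] [TopologicalSpace Y] {K : Set X} {L M u v : X → ℂ}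

theorem ne_zero (hL : IsLogOn L u K) {x : X} (hx : x ∈ K) : u x ≠ 0 :=
  hL.exp_eq x hx ▸ Complex.exp_ne_zero _

theorem comp {S : Set Y} {φ : Y → X} (hL : IsLogOn L u K) (hφ : ContinuousOn φ S)
    (hS : Set.MapsTo φ S K) : IsLogOn (L ∘ φ) (u ∘ φ) S :=
  ⟨hL.continuousOn.comp hφ hS, fun y hy => hL.exp_eq (φ y) (hS hy)⟩

theorem sub (hL : IsLogOn L u K) (hM : IsLogOn M v K) : IsLogOn (L - M) (u / v) K :=
  ⟨hL.continuousOn.sub hM.continuousOn, fun x hx => by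
    simp [Complex.exp_sub, hL.exp_eq x hx, hM.exp_eq x hx]⟩

theorem sub_eq_sub (hL : IsLogOn L u K) (hM : IsLogOn M v K) (hK : IsPreconnected K) {c : ℂ}
    (hc : ∀ x ∈ K, u x = c * v x) {x y : X} (hx : x ∈ K) (hy : y ∈ K) :
    L x - M x = L y - M y := by
  have hconst : ∀ a ∈ K, Complex.exp (L a - M a) = c := fun a ha => by
    rw [Complex.exp_sub, hL.exp_eq a ha, hM.exp_eq a ha, hc a ha,
      mul_div_cancel_right₀ _ (hM.ne_zero ha)]
  refine Complex.isCoveringMap_exp.constOn_of_comp (g := L - M) hK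
    (hL.continuousOn.sub hM.continuousOn) (fun a ha b hb => Subtype.ext ?_) hx hy
  exact (hconst a ha).trans (hconst b hb).symm

end IsLogOn

theorem exists_isLogOn_of_homotopy {X : Type*} [TopologicalSpace X] {K : Set X}
    {u : ℝ × X → ℂ} (hu : ContinuousOn u (Set.Icc 0 1 ×ˢ K))
    (hu0 : ∀ p ∈ Set.Icc (0 : ℝ) 1 ×ˢ K, u p ≠ 0) {L₀ : X → ℂ}
    (hL₀ : IsLogOn L₀ (fun x => u (0, x)) K) : ∃ L, IsLogOn L (fun x => u (1, x)) K := by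
  classical
  let H : C(unitInterval × K, {z : ℂ // z ≠ 0}) :=
    { toFun := fun p => ⟨u (p.1, p.2), hu0 _ ⟨p.1.2, p.2.2⟩⟩
      continuous_toFun := Continuous.subtype_mk
        (hu.comp_continuous (by fun_prop) fun p => ⟨p.1.2, p.2.2⟩) _ }
  let f : C(K, ℂ) := ⟨K.domRestrict L₀, hL₀.continuousOn.domRestrict⟩
  have H0 (x : K) : H (0, x) = ⟨Complex.exp (f x), Complex.exp_ne_zero _⟩ :=
    Subtype.ext (hL₀.exp_eq x x.2).symm
  let M := Complex.isCoveringMap_exp.liftHomotopy H f H0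
  have hM : ∀ x : K, Complex.exp (M (1, x)) = u (1, x) := fun x =>
    congrArg Subtype.val (congrFun (Complex.isCoveringMap_exp.liftHomotopy_lifts H f H0) (1, x))
  refine ⟨fun x => if hx : x ∈ K then M (1, ⟨x, hx⟩) else 0, ?_, fun x hx => ?_⟩
  · rw [continuousOn_iff_continuous_domRestrict]
    have : Continuous fun x : K => M (1, x) := by fun_prop
    convert this using 2 with x
    simp
  · simpa [hx] using hM ⟨x, hx⟩

theorem exists_isLogOn {E : Type*} [AddCommGroup E] [Module ℝ E] [TopologicalSpace E]
    [ContinuousAdd E] [ContinuousSMul ℝ E] {K : Set E} {k : E} (hk : k ∈ K)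
    (hK : StarConvex ℝ k K) {u : E → ℂ} (hu : ContinuousOn u K) (hu0 : ∀ x ∈ K, u x ≠ 0) :
    ∃ L, IsLogOn L u K := by
  have hmaps : Set.MapsTo (fun p : ℝ × E => (1 - p.1) • k + p.1 • p.2) (Set.Icc 0 1 ×ˢ K) K :=
    fun p hp => hK hp.2 (by linarith [hp.1.2]) hp.1.1 (by ring)
  obtain ⟨L, hL⟩ := exists_isLogOn_of_homotopy (L₀ := fun _ => Complex.log (u k))
    (u := fun p : ℝ × E => u ((1 - p.1) • k + p.1 • p.2))
    (hu.comp (by fun_prop) hmaps) (fun p hp => hu0 _ (hmaps hp))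
    ⟨continuousOn_const, fun x _ => by simp [Complex.exp_log (hu0 k hk)]⟩
  exact ⟨L, by simpa using hL⟩

theorem isPreconnected_compl_diagonal {E : Type*} [AddCommGroup E] [Module ℝ E]
    [TopologicalSpace E] [ContinuousAdd E] [ContinuousSMul ℝ E] (hE : 1 < Module.rank ℝ E) :
    IsPreconnected (Set.diagonal E)ᶜ := by
  have himage : (fun p : E × E => (p.1, p.1 + p.2)) '' Set.univ ×ˢ {0}ᶜ = (Set.diagonal E)ᶜ := by
    ext ⟨x, y⟩
    simp only [Set.mem_image, Set.mem_prod, Set.mem_univ, true_and, Set.mem_compl_iff,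
      Set.mem_diagonal_iff, Prod.mk.injEq, Prod.exists]
    refine ⟨?_, fun h => ⟨x, y - x, sub_ne_zero.2 (Ne.symm h), rfl, add_sub_cancel x y⟩⟩
    rintro ⟨_, v, hv, rfl, rfl⟩
    simpa using hv
  rw [← himage]
  have : PreconnectedSpace E := ⟨(convex_univ (𝕜 := ℝ)).isPreconnected⟩
  exact (isPreconnected_univ.prod (isConnected_compl_singleton_of_one_lt_rank hE 0).2).image _
    (by fun_prop)

section Slope

variable {G : ℂ → ℂ} {C : ℝ}

theorem slope_ne_zero_of_injective (hinj : Function.Injective G) {x y : ℂ} (hxy : x ≠ y) :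
    slope G x y ≠ 0 := by
  rw [slope_def_field]
  exact div_ne_zero (sub_ne_zero.2 (hinj.ne hxy.symm)) (sub_ne_zero.2 hxy.symm)

theorem slope_mem_slitPlane (hC : ∀ x, ‖G x - x‖ ≤ C) {x y : ℂ} (hxy : 2 * C < ‖y - x‖) :
    slope G x y ∈ Complex.slitPlane := by
  have hpos : 0 < ‖y - x‖ := by linarith [(norm_nonneg _).trans (hC 0)]
  have hne : y - x ≠ 0 := norm_pos_iff.1 hpos
  have hslope : slope G x y = 1 + ((G y - y) - (G x - x)) / (y - x) := by
    rw [slope_def_field]; field_simp; ring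
  rw [hslope]
  refine Complex.mem_slitPlane_of_norm_lt_one ?_
  rw [norm_div, div_lt_one hpos]
  linarith [norm_sub_le (G y - y) (G x - x), hC x, hC y]

theorem continuousOn_slope_of_continuous (hG : Continuous G) :
    ContinuousOn (fun p : ℂ × ℂ => slope G p.1 p.2) (Set.diagonal ℂ)ᶜ := by
  simp only [slope_def_field]
  exact ContinuousOn.div (by fun_prop) (by fun_prop) fun p hp => sub_ne_zero.2 (Ne.symm hp)

-- The homotopy pushes `y` to distance more than `2 * C` from `x`, along the ray issued from `x`.
theorem exists_isLogOn_slope (hG : Continuous G) (hinj : Function.Injective G)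
    (hC : ∀ x, ‖G x - x‖ ≤ C) :
    ∃ W, IsLogOn W (fun p : ℂ × ℂ => slope G p.1 p.2) (Set.diagonal ℂ)ᶜ := by
  have hC0 : 0 ≤ C := (norm_nonneg _).trans (hC 0)
  let dilation : ℝ × ℂ × ℂ → ℝ := fun q => 1 + (1 - q.1) * (2 * C / ‖q.2.2 - q.2.1‖)
  let push : ℝ × ℂ × ℂ → ℂ × ℂ := fun q => (q.2.1, q.2.1 + dilation q • (q.2.2 - q.2.1))
  have hdilation : ContinuousOn dilation (Set.Icc 0 1 ×ˢ (Set.diagonal ℂ)ᶜ) := by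
    refine continuousOn_const.add (ContinuousOn.mul (by fun_prop)
      (continuousOn_const.div (by fun_prop) fun q hq => ?_))
    exact norm_ne_zero_iff.2 (sub_ne_zero.2 (Ne.symm hq.2))
  have hpush : ContinuousOn push (Set.Icc 0 1 ×ˢ (Set.diagonal ℂ)ᶜ) :=
    ContinuousOn.prodMk (by fun_prop)
      (ContinuousOn.add (by fun_prop) (hdilation.smul (by fun_prop)))
  have hmaps : Set.MapsTo push (Set.Icc 0 1 ×ˢ (Set.diagonal ℂ)ᶜ) (Set.diagonal ℂ)ᶜ := by
    rintro ⟨τ, x, y⟩ ⟨⟨-, hτ⟩, hxy⟩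
    have hpos : 0 < dilation (τ, x, y) :=
      add_pos_of_pos_of_nonneg one_pos (mul_nonneg (sub_nonneg.2 hτ) (by positivity))
    simpa [push, sub_eq_zero, hpos.ne'] using Ne.symm hxy
  have hfar : ∀ p ∈ (Set.diagonal ℂ)ᶜ, 2 * C < ‖(push (0, p)).2 - (push (0, p)).1‖ := by
    rintro ⟨x, y⟩ hxy
    have hpos : 0 < ‖y - x‖ := norm_pos_iff.2 (sub_ne_zero.2 (Ne.symm hxy))
    have hdil : 0 ≤ 1 + 2 * C / ‖y - x‖ := by positivity
    simp only [push, dilation, add_sub_cancel_left, norm_smul, sub_zero, one_mul,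
      Real.norm_of_nonneg hdil]
    field_simp
    linarith
  obtain ⟨W, hW⟩ := exists_isLogOn_of_homotopy
    (u := fun q => slope G (push q).1 (push q).2)
    (L₀ := fun p => Complex.log (slope G (push (0, p)).1 (push (0, p)).2))
    ((continuousOn_slope_of_continuous hG).comp hpush hmaps)
    (fun q hq => slope_ne_zero_of_injective hinj (hmaps hq))
    ⟨ContinuousOn.clog (((continuousOn_slope_of_continuous hG).comp hpush hmaps).comp
        (by fun_prop) fun p hp => ⟨by simp, hp⟩) fun p hp => slope_mem_slitPlane hC (hfar p hp),
      fun p hp => Complex.exp_log (Complex.slitPlane_ne_zero (slope_mem_slitPlane hC (hfar p hp)))⟩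
  exact ⟨W, by simpa [push, dilation] using hW⟩

theorem IsLogOn.slope_swap {W : ℂ × ℂ → ℂ}
    (hW : IsLogOn W (fun p : ℂ × ℂ => slope G p.1 p.2) (Set.diagonal ℂ)ᶜ) {x y : ℂ}
    (hxy : x ≠ y) : W (y, x) = W (x, y) := by
  have hswap : Set.MapsTo Prod.swap (Set.diagonal ℂ)ᶜ (Set.diagonal ℂ)ᶜ := fun p hp => Ne.symm hp
  have hconst := (hW.comp continuous_swap.continuousOn hswap).sub_eq_sub hW (c := 1)
    (isPreconnected_compl_diagonal (by simp)) (fun p _ => by simp [slope_comm G p.2])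
    (x := (x, y)) (y := (y, x)) hxy hxy.symm
  simp only [Function.comp_apply, Prod.swap_prod_mk] at hconst
  linear_combination hconst / 2

end Slope

/-! ### Translation lines of plane homeomorphisms -/

/-- A parametrised translation line of `G`: the restriction of `γ` to `[0, 1]` is a translation arc
in the sense of Brouwer, and `γ` runs through its successive images under `G`. -/
structure IsTranslationLine {X : Type*} [TopologicalSpace X] (G : X → X) (γ : ℝ → X) : Prop where
  continuous : Continuous γ
  add_one : ∀ t, γ (t + 1) = G (γ t)
  ne : ∀ s t, 0 < t - s → t - s ≤ 1 → γ s ≠ γ t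

/-- The pairs of parameters `(s, t)` with `s < t` for which `γ s ≠ γ t` when `γ` is a translation
line and `(S, T)` is a coincidence `γ S = γ T` with `S < T` and `T - S` minimal. -/
def chordDomain (S T : ℝ) : Set (ℝ × ℝ) :=
  {p | 0 < p.2 - p.1 ∧ (p.2 - p.1 ≤ 1 ∨ S ≤ p.1 ∧ p.2 ≤ T ∧ p.2 - p.1 < T - S)}

theorem add_one_mem_chordDomain (S T t : ℝ) : (t, t + 1) ∈ chordDomain S T :=
  ⟨by simp, Or.inl (by simp)⟩

theorem mem_chordDomain_of_mem_Ioo_left {S T u : ℝ} (hu : u ∈ Set.Ioo S T) :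
    (u, T) ∈ chordDomain S T :=
  ⟨sub_pos.2 hu.2, Or.inr ⟨hu.1.le, le_rfl, sub_lt_sub_left hu.1 T⟩⟩

theorem mem_chordDomain_of_mem_Ioo_right {S T u : ℝ} (hu : u ∈ Set.Ioo S T) :
    (S, u) ∈ chordDomain S T :=
  ⟨sub_pos.2 hu.1, Or.inr ⟨le_rfl, hu.2.le, sub_lt_sub_right hu.2 S⟩⟩

theorem starConvex_chordDomain {S T : ℝ} (hST : 1 < T - S) :
    StarConvex ℝ (S, S + 1) (chordDomain S T) := by
  let fst := LinearMap.fst ℝ ℝ ℝ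
  let snd := LinearMap.snd ℝ ℝ ℝ
  have hpos : Convex ℝ {p : ℝ × ℝ | 0 < p.2 - p.1} := convex_halfSpace_gt (snd - fst).isLinear 0
  have hshort : Convex ℝ {p : ℝ × ℝ | p.2 - p.1 ≤ 1} := convex_halfSpace_le (snd - fst).isLinear 1
  have hinner : Convex ℝ {p : ℝ × ℝ | S ≤ p.1 ∧ p.2 ≤ T ∧ p.2 - p.1 < T - S} :=
    (convex_halfSpace_ge fst.isLinear S).inter
      ((convex_halfSpace_le snd.isLinear T).inter
        (convex_halfSpace_lt (snd - fst).isLinear (T - S)))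
  have hunion : chordDomain S T = ({p | 0 < p.2 - p.1} ∩ {p | p.2 - p.1 ≤ 1}) ∪
      ({p | 0 < p.2 - p.1} ∩ {p | S ≤ p.1 ∧ p.2 ≤ T ∧ p.2 - p.1 < T - S}) := by
    rw [← Set.inter_union_distrib_left]; rfl
  rw [hunion]
  refine ((hpos.inter hshort).starConvex ?_).union ((hpos.inter hinner).starConvex ?_)
  · exact ⟨by simp, (add_sub_cancel_left S 1).le⟩
  · exact ⟨by simp, le_rfl, by simp only; linarith, by simpa using hST⟩

theorem IsTranslationLine.exists_minimal_coincidence {X : Type*} [TopologicalSpace X] [T2Space X]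
    {G : X → X} {γ : ℝ → X} (hγ : IsTranslationLine G γ) (hninj : ¬ Function.Injective γ) :
    ∃ S T, 1 < T - S ∧ γ S = γ T ∧ ∀ p ∈ chordDomain S T, γ p.1 ≠ γ p.2 := by
  obtain ⟨a, b, hab, heq⟩ : ∃ a b, a < b ∧ γ a = γ b := by
    obtain ⟨a, b, heq, hne⟩ := Function.not_injective_iff.1 hninj
    rcases hne.lt_or_gt with h | h
    exacts [⟨a, b, h, heq⟩, ⟨b, a, h, heq.symm⟩]
  have hcont := hγ.continuous
  have hlong : ∀ s t, γ s = γ t → 0 < t - s → 1 < t - s := fun s t h hpos =>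
    not_le.1 fun hle => hγ.ne s t hpos hle h
  have hcompact : IsCompact (Set.Icc a b ×ˢ Set.Icc a b ∩
      ({p : ℝ × ℝ | 1 ≤ p.2 - p.1} ∩ {p | γ p.1 = γ p.2})) :=
    (isCompact_Icc.prod isCompact_Icc).inter_right
      ((isClosed_le (by fun_prop) (by fun_prop)).inter (isClosed_eq (by fun_prop) (by fun_prop)))
  obtain ⟨⟨S, T⟩, ⟨⟨hS, hT⟩, hd, hST⟩, hmin⟩ := hcompact.exists_isMinOn
    ⟨(a, b), ⟨⟨le_rfl, hab.le⟩, hab.le, le_rfl⟩, (hlong a b heq (sub_pos.2 hab)).le, heq⟩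
    (f := fun p => p.2 - p.1) (by fun_prop)
  refine ⟨S, T, hlong S T hST (one_pos.trans_le hd), hST, ?_⟩
  rintro ⟨s, t⟩ ⟨hpos, hshort | ⟨hs, ht, hlt⟩⟩ h
  · exact hγ.ne s t hpos hshort h
  · have hst : s ≤ t := (sub_pos.1 hpos).le
    refine hlt.not_ge (hmin (a := (s, t)) ⟨⟨?_, ?_⟩, (hlong s t h hpos).le, h⟩)
    exacts [⟨hS.1.trans hs, hst.trans (ht.trans hT.2)⟩, ⟨hS.1.trans (hs.trans hst), ht.trans hT.2⟩]

section ChordLog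

variable {G : ℂ → ℂ} {γ : ℝ → ℂ} {S T : ℝ} {A : ℝ × ℝ → ℂ}

theorem IsLogOn.chord_coincidence (hA : IsLogOn A (fun p => γ p.2 - γ p.1) (chordDomain S T))
    (hST : γ S = γ T) {u v : ℝ} (hu : u ∈ Set.Ioo S T) (hv : v ∈ Set.Ioo S T) :
    A (u, T) - A (S, u) = A (v, T) - A (S, v) := by
  have hleft : Set.MapsTo (fun u => (u, T)) (Set.Ioo S T) (chordDomain S T) := fun _ =>
    mem_chordDomain_of_mem_Ioo_left
  have hright : Set.MapsTo (fun u => (S, u)) (Set.Ioo S T) (chordDomain S T) := fun _ =>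
    mem_chordDomain_of_mem_Ioo_right
  exact (hA.comp (by fun_prop) hleft).sub_eq_sub (hA.comp (by fun_prop) hright) (c := -1)
    isPreconnected_Ioo (fun u _ => by simp [hST]) hu hv

theorem IsLogOn.exp_chord_coincidence (hA : IsLogOn A (fun p => γ p.2 - γ p.1) (chordDomain S T))
    (hST : γ S = γ T) {u : ℝ} (hu : u ∈ Set.Ioo S T) :
    Complex.exp (A (u, T) - A (S, u)) = -1 := by
  have hright := mem_chordDomain_of_mem_Ioo_right hu
  rw [Complex.exp_sub, hA.exp_eq _ (mem_chordDomain_of_mem_Ioo_left hu), hA.exp_eq _ hright,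
    ← hST, ← neg_sub (γ u), neg_div, div_self (hA.ne_zero hright)]

theorem IsLogOn.slope_chord_add_one (hγ : IsTranslationLine G γ)
    {W : ℂ × ℂ → ℂ} (hW : IsLogOn W (fun p : ℂ × ℂ => slope G p.1 p.2) (Set.diagonal ℂ)ᶜ)
    (hA : IsLogOn A (fun p => γ p.2 - γ p.1) (chordDomain S T)) (hST : 1 < T - S) :
    W (γ S, γ (T - 1)) - (A (S + 1, T) - A (S, T - 1)) =
      W (γ S, γ (S + 1)) - (A (S + 1, S + 1 + 1) - A (S, S + 1)) := by
  have hcont := hγ.continuous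
  have hchord : Set.MapsTo (fun t => (S, t)) (Set.uIcc (T - 1) (S + 1)) (chordDomain S T) := by
    rintro t ht
    rcases Set.mem_uIcc.1 ht with h | h
    · exact ⟨by simp only; linarith, Or.inl (by simp only; linarith)⟩
    · exact ⟨by simp only; linarith, Or.inr
        ⟨le_rfl, by simp only; linarith, by simp only; linarith⟩⟩
  have hshift : Set.MapsTo (fun t => (S + 1, t + 1)) (Set.uIcc (T - 1) (S + 1))
      (chordDomain S T) := by
    rintro t ht
    rcases Set.mem_uIcc.1 ht with h | h
    · exact ⟨by simp only; linarith, Or.inl (by simp only; linarith)⟩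
    · exact ⟨by simp only; linarith, Or.inr
        ⟨by simp, by simp only; linarith, by simp only; linarith⟩⟩
  have hne : Set.MapsTo (fun t => (γ S, γ t)) (Set.uIcc (T - 1) (S + 1)) (Set.diagonal ℂ)ᶜ :=
    fun t ht h => hA.ne_zero (hchord ht) (sub_eq_zero.2 (Eq.symm h))
  have hconst := (hW.comp (by fun_prop) hne).sub_eq_sub
    ((hA.comp (by fun_prop) hshift).sub (hA.comp (by fun_prop) hchord)) (c := 1)
    isPreconnected_uIcc (fun t _ => by simp [slope_def_field, hγ.add_one])
    Set.left_mem_uIcc Set.right_mem_uIcc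
  simpa using hconst

theorem IsLogOn.chord_add_one (hγ : IsTranslationLine G γ)
    (hA : IsLogOn A (fun p => γ p.2 - γ p.1) (chordDomain S T)) {θ : ℂ → ℂ}
    (hθ : IsLogOn θ (fun x => G x - x) Set.univ) (s t : ℝ) :
    θ (γ s) - A (s, s + 1) = θ (γ t) - A (t, t + 1) :=
  (hθ.comp hγ.continuous.continuousOn (Set.mapsTo_univ _ _)).sub_eq_sub
    (hA.comp (φ := fun t => (t, t + 1)) (S := Set.univ) (by fun_prop) fun t _ =>
      add_one_mem_chordDomain S T t)
    (c := 1) isPreconnected_univ (fun t _ => by simp [hγ.add_one]) trivial trivial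

theorem IsLogOn.slope_displacement (hG : Continuous G) {W : ℂ × ℂ → ℂ}
    (hW : IsLogOn W (fun p : ℂ × ℂ => slope G p.1 p.2) (Set.diagonal ℂ)ᶜ) {θ : ℂ → ℂ}
    (hθ : IsLogOn θ (fun x => G x - x) Set.univ) (x y : ℂ) :
    W (x, G x) - (θ (G x) - θ x) = W (y, G y) - (θ (G y) - θ y) := by
  have hne : Set.MapsTo (fun x => (x, G x)) Set.univ (Set.diagonal ℂ)ᶜ := fun x _ h =>
    hθ.ne_zero (Set.mem_univ x) (sub_eq_zero.2 (Eq.symm h))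
  exact (hW.comp (by fun_prop) hne).sub_eq_sub
    ((hθ.comp (S := Set.univ) hG.continuousOn (Set.mapsTo_univ _ _)).sub hθ) (c := 1)
    isPreconnected_univ (fun x _ => by simp [slope_def_field]) trivial trivial

end ChordLog

/- Brouwer's lemma. If `γ S = γ T` is a coincidence with `T - S` minimal, then all the chords
`γ t - γ s` in sight have logarithms, and so do the displacement of `G` and its slope. Since the
slope is symmetric, comparing them around the loop shows that the chords from `γ S` to `γ (S + 1)`
and from `γ (S + 1)` to `γ T` have the same logarithm; but these two chords are opposite. -/
theorem IsTranslationLine.injective {G : ℂ → ℂ} {γ : ℝ → ℂ} (hγ : IsTranslationLine G γ)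
    (hG : Continuous G) (hinj : Function.Injective G) {C : ℝ} (hC : ∀ x, ‖G x - x‖ ≤ C)
    (hfix : ∀ x, G x ≠ x) : Function.Injective γ := by
  by_contra hninj
  obtain ⟨S, T, hlong, hST, hne⟩ := hγ.exists_minimal_coincidence hninj
  have hcont := hγ.continuous
  obtain ⟨W, hW⟩ := exists_isLogOn_slope hG hinj hC
  obtain ⟨θ, hθ⟩ := exists_isLogOn (Set.mem_univ 0) (starConvex_univ (𝕜 := ℝ) 0)
    (u := fun x => G x - x) (by fun_prop) fun x _ => sub_ne_zero.2 (hfix x)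
  obtain ⟨A, hA⟩ := exists_isLogOn (add_one_mem_chordDomain S T S)
    (starConvex_chordDomain hlong) (u := fun p => γ p.2 - γ p.1) (by fun_prop)
    fun p hp => sub_ne_zero.2 (hne p hp).symm
  have hfirst : S + 1 ∈ Set.Ioo S T := ⟨by linarith, by linarith⟩
  have hlast : T - 1 ∈ Set.Ioo S T := ⟨by linarith, by linarith⟩
  have hslope := hW.slope_displacement hG hθ (γ (T - 1)) (γ S)
  have hswap := hW.slope_swap (hne (S, T - 1) (mem_chordDomain_of_mem_Ioo_right hlast))
  have hchord := hW.slope_chord_add_one hγ hA hlong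
  have hend := hA.chord_add_one hγ hθ S (T - 1)
  have hstart := hA.chord_add_one hγ hθ S (S + 1)
  have hcoin := hA.chord_coincidence hST hfirst hlast
  simp only [← hγ.add_one, sub_add_cancel, ← hST] at hslope hend
  have hzero : A (S + 1, T) - A (S, S + 1) = 0 := by
    linear_combination (hslope - hchord - hswap + hend + hstart + hcoin) / 2
  have hneg := hA.exp_chord_coincidence hST hfirst
  rw [hzero, Complex.exp_zero] at hneg
  norm_num at hneg

theorem IsTranslationLine.add_natCast {X : Type*} [TopologicalSpace X] {G : X → X} {γ : ℝ → X}
    (hγ : IsTranslationLine G γ) (t : ℝ) (n : ℕ) : γ (t + n) = G^[n] (γ t) := by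
  have hsemi : Function.Semiconj γ (fun t => t + 1) G := hγ.add_one
  simpa [add_right_iterate] using (hsemi.iterate_right n).eq t

/-- The concatenation of the images `G ^ n ∘ α` of an arc `α : [0, 1] → X`, parametrised so that
`G` acts as the translation by `1`. -/
def streamline {X : Type*} [TopologicalSpace X] (G : X ≃ₜ X) (α : ℝ → X) (t : ℝ) : X :=
  (G ^ ⌊t⌋) (α (Int.fract t))

section Streamline

variable {X : Type*} [TopologicalSpace X] {G : X ≃ₜ X} {α : ℝ → X}

theorem streamline_add_intCast (t : ℝ) (n : ℤ) :
    streamline G α (t + n) = (G ^ n) (streamline G α t) := by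
  simp only [streamline, Int.floor_add_intCast, Int.fract_add_intCast, add_comm _ n, zpow_add,
    Homeomorph.mul_apply]

theorem streamline_of_mem_Icc (h01 : G (α 0) = α 1) {t : ℝ} (ht : t ∈ Set.Icc 0 1) :
    streamline G α t = α t := by
  rcases ht.2.lt_or_eq with h | rfl
  · simp [streamline, Int.floor_eq_zero_iff.2 ⟨ht.1, h⟩, Int.fract_eq_self.2 ⟨ht.1, h⟩]
  · simp [streamline, h01]

theorem continuous_streamline (h01 : G (α 0) = α 1) (hα : ContinuousOn α (Set.Icc 0 1)) :
    Continuous (streamline G α) := by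
  have hpiece (n : ℤ) : ContinuousOn (streamline G α) (Set.Icc (n : ℝ) (n + 1)) := by
    have hmaps : Set.MapsTo (fun t : ℝ => t - n) (Set.Icc (n : ℝ) (n + 1)) (Set.Icc 0 1) :=
      fun t ht => ⟨sub_nonneg.2 ht.1, sub_le_iff_le_add'.2 ht.2⟩
    refine ((G ^ n).continuous.comp_continuousOn (hα.comp (by fun_prop) hmaps)).congr
      fun t ht => ?_
    simpa [streamline_of_mem_Icc h01 (hmaps ht)] using
      streamline_add_intCast (G := G) (α := α) (t - n) n
  refine continuous_iff_continuousAt.2 fun t => continuousAt_iff_continuous_left_right.2 ⟨?_, ?_⟩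
  · have ht : t ∈ Set.Ioc ((⌈t⌉ - 1 : ℤ) : ℝ) ((⌈t⌉ - 1 : ℤ) + 1) := by
      push_cast
      exact ⟨by linarith [Int.ceil_lt_add_one t], by linarith [Int.le_ceil t]⟩
    exact (hpiece (⌈t⌉ - 1) t (Set.Ioc_subset_Icc_self ht)).mono_of_mem_nhdsWithin
      (Icc_mem_nhdsLE_of_mem ht)
  · have ht : t ∈ Set.Ico (⌊t⌋ : ℝ) (⌊t⌋ + 1) := ⟨Int.floor_le t, Int.lt_floor_add_one t⟩
    exact (hpiece ⌊t⌋ t (Set.Ico_subset_Icc_self ht)).mono_of_mem_nhdsWithin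
      (Icc_mem_nhdsGE_of_mem ht)

theorem isTranslationLine_streamline (hfix : ∀ x, G x ≠ x) (h01 : G (α 0) = α 1)
    (hα : ContinuousOn α (Set.Icc 0 1)) (hinj : Set.InjOn α (Set.Icc 0 1)) {D : Set X}
    (hD : Set.MapsTo α (Set.Ioo 0 1) D) (hGD : Disjoint (G '' D) D) :
    IsTranslationLine G (streamline G α) := by
  have hadd (t : ℝ) : streamline G α (t + 1) = G (streamline G α t) := by
    simpa using streamline_add_intCast (G := G) (α := α) t 1
  have hIcc {t : ℝ} (h₀ : 0 ≤ t) (h₁ : t ≤ 1) : streamline G α t = α t :=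
    streamline_of_mem_Icc h01 ⟨h₀, h₁⟩
  have hne (s t : ℝ) (hs₀ : 0 ≤ s) (hs₁ : s < 1) (hpos : 0 < t - s) (hle : t - s ≤ 1) :
      streamline G α s ≠ streamline G α t := by
    intro h
    obtain ⟨u, rfl⟩ : ∃ u, t = u + 1 := ⟨t - 1, by ring⟩
    rcases le_or_gt u 0 with hu | hu
    · rw [hIcc hs₀ hs₁.le, hIcc (by linarith) (by linarith)] at h
      linarith [hinj ⟨hs₀, hs₁.le⟩ ⟨by linarith, by linarith⟩ h]
    have hus : u ≤ s := by linarith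
    rw [hadd] at h
    rcases hus.lt_or_eq with hus | rfl
    · rw [hIcc hs₀ hs₁.le, hIcc hu.le (hus.trans hs₁).le] at h
      exact Set.disjoint_left.1 hGD ⟨α u, hD ⟨hu, hus.trans hs₁⟩, h.symm⟩ (hD ⟨hu.trans hus, hs₁⟩)
    · exact hfix _ h.symm
  refine ⟨continuous_streamline h01 hα, hadd, fun s t hpos hle h => ?_⟩
  have hs := streamline_add_intCast (G := G) (α := α) (Int.fract s) ⌊s⌋
  have ht := streamline_add_intCast (G := G) (α := α) (t - ⌊s⌋) ⌊s⌋
  rw [Int.fract_add_floor] at hs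
  rw [sub_add_cancel] at ht
  rw [hs, ht] at h
  exact hne _ _ (Int.fract_nonneg s) (Int.fract_lt_one s) (by unfold Int.fract; linarith)
    (by unfold Int.fract; linarith) ((G ^ ⌊s⌋).injective h)

end Streamline

theorem exists_touching_ball {E : Type*} [NormedAddCommGroup E] [NormedSpace ℝ E] [ProperSpace E]
    (G : E ≃ₜ E) (hfix : ∀ x, G x ≠ x) (z : E) :
    ∃ r > 0, ∃ y ∈ Metric.sphere z r, G y ∈ Metric.sphere z r ∧
      Disjoint (G '' Metric.ball z r) (Metric.ball z r) := by
  let radius : E → ℝ := fun a => max (dist a z) (dist (G a) z)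
  have hproper : Tendsto radius (cocompact E) atTop :=
    tendsto_atTop_mono (fun a => le_max_left _ _) (tendsto_dist_right_cocompact_atTop z)
  obtain ⟨y, hmin⟩ := (show Continuous radius by fun_prop).exists_forall_le hproper
  have hrpos : 0 < radius y := by
    by_contra! h
    exact hfix y ((dist_le_zero.1 ((le_max_right _ _).trans h)).trans
      (dist_le_zero.1 ((le_max_left _ _).trans h)).symm)
  have hfree : Disjoint (G '' Metric.ball z (radius y)) (Metric.ball z (radius y)) := by
    rw [Set.disjoint_left]
    rintro _ ⟨a, ha, rfl⟩ hGa
    exact (hmin a).not_gt (max_lt ha hGa)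
  have hy : y ∈ closure (Metric.ball z (radius y)) :=
    closure_ball z hrpos.ne' ▸ le_max_left (dist y z) _
  have hGy : G y ∈ closure (Metric.ball z (radius y)) :=
    closure_ball z hrpos.ne' ▸ le_max_right _ (dist (G y) z)
  have hopen : IsOpen (G '' Metric.ball z (radius y)) := G.isOpenMap _ Metric.isOpen_ball
  refine ⟨radius y, hrpos, y, ?_, ?_, hfree⟩
  · refine (le_max_left _ _).eq_of_not_lt fun h => ?_
    exact Set.disjoint_left.1 (hfree.closure_right hopen) ⟨y, h, rfl⟩ hGy
  · refine (le_max_right _ _).eq_of_not_lt fun h => ?_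
    exact Set.disjoint_left.1 (hfree.closure_left Metric.isOpen_ball)
      (image_closure_subset_closure_image G.continuous ⟨y, hy, rfl⟩) h

/-! ### Recurrent points of plane homeomorphisms -/

/-- The concatenation of the two radii from `v'` to `0` and from `0` to `v`, parametrised by
`[-1, 1]`, where the circle of radius `|s| * ‖v‖` has been rotated by the angle `κ * (1 - |s|)`:
for a suitable `κ`, this arc across the disc passes through any given point of it. -/
def twistedRadii (v v' : ℂ) (κ s : ℝ) : ℂ :=
  Complex.exp ((κ * (1 - |s|) : ℝ) * Complex.I) * (s⁺ • v + s⁻ • v')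

section TwistedRadii

variable {v v' : ℂ} {κ : ℝ}

theorem continuous_twistedRadii : Continuous (twistedRadii v v' κ) := by
  unfold twistedRadii; fun_prop

theorem norm_twistedRadii (hv : ‖v'‖ = ‖v‖) (s : ℝ) : ‖twistedRadii v v' κ s‖ = |s| * ‖v‖ := by
  rw [twistedRadii, norm_mul, Complex.norm_exp_ofReal_mul_I, one_mul]
  rcases le_total 0 s with hs | hs
  · simp [posPart_of_nonneg hs, negPart_of_nonneg hs]
  · simp [posPart_of_nonpos hs, negPart_of_nonpos hs, hv]

theorem twistedRadii_injective (hv : ‖v'‖ = ‖v‖) (hne : v ≠ v') :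
    Function.Injective (twistedRadii v v' κ) := by
  have hv0 : ‖v‖ ≠ 0 := fun h => hne <| by
    rw [norm_eq_zero.1 h, norm_eq_zero.1 (hv.trans h)]
  intro s t hst
  have habs : |s| = |t| := mul_right_cancel₀ hv0 <| by
    rw [← norm_twistedRadii (κ := κ) hv, hst, norm_twistedRadii hv]
  rcases abs_eq_abs.1 habs with h | rfl
  · exact h
  rw [twistedRadii, twistedRadii, habs] at hst
  have hswap : t⁻ • v + t⁺ • v' = t⁺ • v + t⁻ • v' := by
    simpa using mul_left_cancel₀ (Complex.exp_ne_zero _) hst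
  have hzero : t • (v - v') = 0 := by
    rw [← posPart_sub_negPart t, sub_smul, smul_sub, smul_sub]
    linear_combination -hswap
  have ht : t = 0 := (smul_eq_zero.1 hzero).resolve_right (sub_ne_zero.2 hne)
  simp [ht]

theorem exists_twistedRadii_eq {q : ℂ} (hq : ‖q‖ < ‖v‖) :
    ∃ κ, ∃ s ∈ Set.Ico (0 : ℝ) 1, twistedRadii v v' κ s = q := by
  have hv0 : v ≠ 0 := norm_pos_iff.1 ((norm_nonneg q).trans_lt hq)
  have hs0 : 0 ≤ ‖q / v‖ := norm_nonneg _
  have hs1 : ‖q / v‖ < 1 := by rwa [norm_div, div_lt_one (norm_pos_iff.2 hv0)]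
  refine ⟨Complex.arg (q / v) / (1 - ‖q / v‖), ‖q / v‖, ⟨hs0, hs1⟩, ?_⟩
  rw [twistedRadii, abs_of_nonneg hs0, div_mul_cancel₀ _ (sub_pos.2 hs1).ne',
    posPart_of_nonneg hs0, negPart_of_nonneg hs0, zero_smul, add_zero, Complex.real_smul,
    ← mul_assoc, mul_comm (Complex.exp _), Complex.norm_mul_exp_arg_mul_I, div_mul_cancel₀ _ hv0]

end TwistedRadii

theorem exists_arc_through {z y y' q : ℂ} {r : ℝ} (hy : y ∈ Metric.sphere z r)
    (hy' : y' ∈ Metric.sphere z r) (hne : y ≠ y') (hq : q ∈ Metric.ball z r) :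
    ∃ α : ℝ → ℂ, Continuous α ∧ Function.Injective α ∧ α 0 = y' ∧ α 1 = y ∧
      Set.MapsTo α (Set.Ioo 0 1) (Metric.ball z r) ∧ α (1 / 2) = z ∧
      ∃ b ∈ Set.Icc (0 : ℝ) 1, α b = q := by
  rw [mem_sphere_iff_norm] at hy hy'
  rw [mem_ball_iff_norm] at hq
  have hr : 0 < r := (norm_nonneg _).trans_lt hq
  obtain ⟨κ, s, hs, hsq⟩ := exists_twistedRadii_eq (v := y - z) (v' := y' - z) (hq.trans_eq hy.symm)
  let α : ℝ → ℂ := fun t => z + twistedRadii (y - z) (y' - z) κ (2 * t - 1)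
  have hα : Continuous α := continuous_const.add (continuous_twistedRadii.comp (by fun_prop))
  have hinj : Function.Injective α := fun t u h => by
    have := twistedRadii_injective (hy'.trans hy.symm) (sub_left_injective.ne hne)
      (add_left_cancel h)
    linarith
  refine ⟨α, hα, hinj, by simp [α, twistedRadii], ?_, fun t ht => ?_, by simp [α, twistedRadii],
    (s + 1) / 2, ⟨by linarith [hs.1], by linarith [hs.2]⟩, ?_⟩
  · norm_num [α, twistedRadii]
  · rw [mem_ball_iff_norm, add_sub_cancel_left, norm_twistedRadii (hy'.trans hy.symm), hy]
    refine mul_lt_of_lt_one_left hr (abs_lt.2 ⟨?_, ?_⟩) <;> linarith [ht.1, ht.2]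
  · have : 2 * ((s + 1) / 2) - 1 = s := by ring
    simp [α, this, hsq]

theorem exists_ball_forall_iterate_notMem (G : ℂ ≃ₜ ℂ) {C : ℝ} (hC : ∀ x, ‖G x - x‖ ≤ C)
    (hfix : ∀ x, G x ≠ x) (z : ℂ) : ∃ r > 0, ∀ n ≥ 1, G^[n] z ∉ Metric.ball z r := by
  obtain ⟨r, hr, y, hy, hGy, hfree⟩ := exists_touching_ball G hfix z
  refine ⟨r, hr, fun n hn hmem => ?_⟩
  obtain ⟨α, hα, hinj, h0, h1, hball, hz, b, hb, hq⟩ :=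
    exists_arc_through hGy hy (hfix y) hmem
  have h01 : G (α 0) = α 1 := by rw [h0, h1]
  have hline := isTranslationLine_streamline hfix h01 hα.continuousOn hinj.injOn hball hfree
  have hreturn : streamline G α (1 / 2 + n) = streamline G α b := by
    rw [hline.add_natCast, streamline_of_mem_Icc h01 (by norm_num), hz,
      streamline_of_mem_Icc h01 hb, hq]
  have hn1 : (1 : ℝ) ≤ n := by exact_mod_cast hn
  linarith [hb.2, hline.injective G.continuous G.injective hC hfix hreturn]

theorem exists_fixedPoint_of_mapClusterPt {G : ℂ ≃ₜ ℂ} {C : ℝ} (hC : ∀ x, ‖G x - x‖ ≤ C) {z : ℂ}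
    (hz : MapClusterPt z atTop fun n => G^[n] z) : ∃ x, G x = x := by
  by_contra! hfix
  obtain ⟨r, hr, hball⟩ := exists_ball_forall_iterate_notMem G hC hfix z
  have hreturn := mapClusterPt_iff_frequently.1 hz _ (Metric.ball_mem_nhds z hr)
  obtain ⟨n, hmem, hn⟩ := (hreturn.and_eventually (eventually_ge_atTop 1)).exists
  exact hball n hn hmem

theorem exists_fixedPoint_of_mapClusterPt_of_finrank_eq_two {E : Type*} [NormedAddCommGroup E]
    [NormedSpace ℝ E] (hE : Module.finrank ℝ E = 2) {G : E ≃ₜ E} {C : ℝ}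
    (hC : ∀ x, ‖G x - x‖ ≤ C) {z : E} (hz : MapClusterPt z atTop fun n => G^[n] z) :
    ∃ x, G x = x := by
  have : FiniteDimensional ℝ E := .of_finrank_eq_succ hE
  let e : E ≃L[ℝ] ℂ := .ofFinrankEq (hE.trans Complex.finrank_real_complex.symm)
  let G' : ℂ ≃ₜ ℂ := e.symm.toHomeomorph.trans (G.trans e.toHomeomorph)
  have hG' (x : E) : G' (e x) = e (G x) := congrArg (e ∘ G) (e.symm_apply_apply x)
  have hbound (x : ℂ) : ‖G' x - x‖ ≤ ‖(e : E →L[ℝ] ℂ)‖ * C := by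
    obtain ⟨x, rfl⟩ := e.surjective x
    rw [hG', ← map_sub]
    exact (e : E →L[ℝ] ℂ).le_opNorm_of_le (hC x)
  have hcluster : MapClusterPt (e z) atTop fun n => G'^[n] (e z) := by
    have hiter (n : ℕ) : G'^[n] (e z) = e (G^[n] z) :=
      (Function.Semiconj.iterate_right (fun x => (hG' x).symm) n z).symm
    simp only [hiter]
    exact hz.continuousAt_comp e.continuous.continuousAt
  obtain ⟨x, hx⟩ := exists_fixedPoint_of_mapClusterPt hbound hcluster
  obtain ⟨x, rfl⟩ := e.surjective x
  exact ⟨x, e.injective ((hG' x).symm.trans hx)⟩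

/-! ### The covering `ℝ² → 𝕋²` -/

section Covering

theorem intVec_neg (v : ℤ × ℤ) : intVec (-v) = -intVec v := by
  simp [intVec]

theorem intVec_eq_zero_of_norm_lt_one {v : ℤ × ℤ} (hv : ‖intVec v‖ < 1) : intVec v = 0 := by
  obtain ⟨h₁, h₂⟩ : |v.1| < 1 ∧ |v.2| < 1 := by
    simpa [intVec, Prod.norm_def, ← Int.cast_abs, ← Int.cast_one (R := ℝ),
      Int.cast_lt, -Int.cast_one] using hv
  simp [intVec, Int.abs_lt_one_iff.1 h₁, Int.abs_lt_one_iff.1 h₂]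

theorem pr2_add (a b : R2) : pr2 (a + b) = pr2 a + pr2 b := by
  simp [pr2]

theorem pr2_eq_zero_iff {a : R2} : pr2 a = 0 ↔ ∃ v, intVec v = a := by
  simp [pr2, intVec, Prod.ext_iff, AddSubgroup.mem_zmultiples_iff]

theorem pr2_eq_pr2_iff {a b : R2} : pr2 a = pr2 b ↔ ∃ v, a = b + intVec v := by
  rw [← sub_eq_zero, sub_eq_add_neg (pr2 a), show -pr2 b = pr2 (-b) from rfl, ← pr2_add,
    pr2_eq_zero_iff]
  exact exists_congr fun v => by rw [← sub_eq_add_neg, eq_sub_iff_add_eq', eq_comm]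

theorem pr2_add_intVec (a : R2) (v : ℤ × ℤ) : pr2 (a + intVec v) = pr2 a :=
  pr2_eq_pr2_iff.2 ⟨v, rfl⟩

theorem surjective_pr2 : Function.Surjective pr2 :=
  QuotientAddGroup.mk_surjective.prodMap QuotientAddGroup.mk_surjective

theorem isOpenQuotientMap_pr2 : IsOpenQuotientMap pr2 :=
  QuotientAddGroup.isOpenQuotientMap_mk.prodMap QuotientAddGroup.isOpenQuotientMap_mk

theorem isCoveringMap_pr2 : IsCoveringMap pr2 := by
  let π : R2 →+ T2 := AddMonoidHom.mk' pr2 pr2_add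
  have hdisc : IsDiscrete (π.ker : Set R2) := by
    refine isDiscrete_iff_discreteTopology.2
      (discreteTopology_of_isOpen_singleton_zero ?_)
    refine ⟨Metric.ball 0 1, Metric.isOpen_ball, ?_⟩
    ext ⟨a, ha⟩
    obtain ⟨v, rfl⟩ := pr2_eq_zero_iff.1 ha
    rw [Set.mem_preimage, mem_ball_zero_iff, Set.mem_singleton_iff, Subtype.ext_iff]
    exact ⟨intVec_eq_zero_of_norm_lt_one, fun hv => by simp [show intVec v = 0 from hv]⟩
  exact (isOpenQuotientMap_pr2.isQuotientMap.isAddQuotientCoveringMap_of_isDiscrete_ker_addMonoidHom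
    (f := π) hdisc).isCoveringMap

theorem sub_eq_sub_of_pr2_eq {X : Type*} [TopologicalSpace X] [PreconnectedSpace X]
    {A B : X → R2} (hA : Continuous A) (hB : Continuous B) (h : ∀ x, pr2 (A x) = pr2 (B x))
    (x y : X) : A x - B x = A y - B y := by
  refine isCoveringMap_pr2.const_of_comp (hA.sub hB) (fun x y => ?_) x y
  have hzero (x : X) : pr2 (A x - B x) = 0 := by
    obtain ⟨v, hv⟩ := pr2_eq_pr2_iff.1 (h x)
    exact pr2_eq_zero_iff.2 ⟨v, by rw [hv, add_sub_cancel_left]⟩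
  rw [Pi.sub_apply, Pi.sub_apply, hzero, hzero]

theorem exists_eq_add_intVec_of_pr2_eq {X : Type*} [TopologicalSpace X] [ConnectedSpace X]
    {A B : X → R2} (hA : Continuous A) (hB : Continuous B) (h : ∀ x, pr2 (A x) = pr2 (B x)) :
    ∃ v, ∀ x, A x = B x + intVec v := by
  let x₀ : X := Classical.arbitrary X
  obtain ⟨v, hv⟩ := pr2_eq_pr2_iff.1 (h x₀)
  refine ⟨v, fun x => sub_eq_iff_eq_add'.1 ?_⟩
  rw [sub_eq_sub_of_pr2_eq hA hB h x x₀, hv, add_sub_cancel_left]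

end Covering

section Lifts

variable {f g : T2 → T2} {F G : R2 → R2}

theorem IsLift.comp (hF : IsLift F f) (hG : IsLift G g) : IsLift (F ∘ G) (f ∘ g) := fun z => by
  simp only [Function.comp, hF (G z), hG z]

theorem IsLift.iterate (hF : IsLift F f) (n : ℕ) : IsLift F^[n] f^[n] :=
  Function.Semiconj.iterate_right (f := pr2) hF n

theorem IsLift.add_intVec (hF : IsLift F f) (v : ℤ × ℤ) : IsLift (fun z => F z + intVec v) f :=
  fun z => by rw [pr2_add_intVec, hF]

theorem Equivariant.comp (hF : Equivariant F) (hG : Equivariant G) : Equivariant (F ∘ G) :=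
  fun z v => by simp only [Function.comp, hG z, hF (G z)]

theorem Equivariant.add_intVec (hF : Equivariant F) (v : ℤ × ℤ) :
    Equivariant fun z => F z + intVec v :=
  fun z u => by simp only [hF z, add_right_comm]

theorem Equivariant.exists_norm_sub_le (hF : Equivariant F) (hc : Continuous F) :
    ∃ C, ∀ x, ‖F x - x‖ ≤ C := by
  obtain ⟨C, hC⟩ := (isCompact_Icc (a := (0 : R2)) (b := 1)).exists_bound_of_continuousOn
    (f := fun x => F x - x) (by fun_prop)
  refine ⟨C, fun x => ?_⟩
  have hx : x = (Int.fract x.1, Int.fract x.2) + intVec (⌊x.1⌋, ⌊x.2⌋) := by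
    ext <;> simp [intVec]
  rw [hx, hF, add_sub_add_right_eq_sub]
  exact hC _ ⟨⟨Int.fract_nonneg _, Int.fract_nonneg _⟩,
    (Int.fract_lt_one _).le, (Int.fract_lt_one _).le⟩

theorem IsotopicToId.id : IsotopicToId id :=
  ⟨.id, _root_.id, .id, fun _ => rfl, fun _ _ => rfl⟩

theorem IsotopicToId.comp (hf : IsotopicToId f) (hg : IsotopicToId g) : IsotopicToId (f ∘ g) := by
  obtain ⟨hf, F, hF, hFf, hFe⟩ := hf
  obtain ⟨hg, G, hG, hGg, hGe⟩ := hg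
  exact ⟨hf.comp hg, F ∘ G, hF.comp hG, hFf.comp hGg, hFe.comp hGe⟩

theorem IsotopicToId.symm {e : T2 ≃ₜ T2} (he : IsotopicToId e) : IsotopicToId e.symm := by
  obtain ⟨-, F, hF, hFe, hFeq⟩ := he
  let F' : R2 ≃ₜ R2 := hF.homeomorph
  refine ⟨e.symm.isHomeomorph, F'.symm, F'.symm.isHomeomorph, fun z => ?_, fun z v => ?_⟩
  · rw [Homeomorph.eq_symm_apply, ← hFe]
    exact congrArg pr2 (F'.apply_symm_apply z)
  · rw [Homeomorph.symm_apply_eq]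
    exact ((hFeq _ v).trans (congrArg (· + intVec v) (F'.apply_symm_apply z))).symm

end Lifts

section Homotopy

theorem homotopicToIdMap_of_homotopic {k : C(T2, T2)}
    (h : (ContinuousMap.id T2).Homotopic k) : HomotopicToIdMap k := by
  obtain ⟨J⟩ := h
  let J' : C(unitInterval × R2, T2) :=
    ⟨fun p => J (p.1, pr2 p.2), by have := isCoveringMap_pr2.continuous; fun_prop⟩
  have hJ₀ (z : R2) : J' (0, z) = pr2 (ContinuousMap.id R2 z) := J.apply_zero (pr2 z)
  let L := isCoveringMap_pr2.liftHomotopy J' (.id R2) hJ₀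
  have hL (p) : pr2 (L p) = J (p.1, pr2 p.2) :=
    congrFun (isCoveringMap_pr2.liftHomotopy_lifts J' (.id R2) hJ₀) p
  have hL₀ (z : R2) : L (0, z) = z := isCoveringMap_pr2.liftHomotopy_zero J' (.id R2) hJ₀ z
  refine ⟨fun z => L (1, z), by fun_prop, fun z => ?_, fun z v => ?_⟩
  · rw [hL]
    exact J.apply_one _
  · have hdiff := sub_eq_sub_of_pr2_eq (X := unitInterval) (A := fun t => L (t, z + intVec v))
      (B := fun t => L (t, z)) (by fun_prop) (by fun_prop)
      (fun t => by rw [hL, hL, pr2_add_intVec]) 1 0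
    rwa [hL₀, hL₀, add_sub_cancel_left, sub_eq_iff_eq_add'] at hdiff

theorem isotopicToId_of_homotopicToIdMap {e : T2 ≃ₜ T2} (he : HomotopicToIdMap e)
    (he' : HomotopicToIdMap e.symm) : IsotopicToId e := by
  obtain ⟨E, hE, hEe, hEeq⟩ := he
  obtain ⟨E', hE', hEe', hEeq'⟩ := he'
  obtain ⟨v, hv⟩ := exists_eq_add_intVec_of_pr2_eq (hE'.comp hE) continuous_id
    fun z => by simp [hEe' (E z), hEe z]
  obtain ⟨v', hv'⟩ := exists_eq_add_intVec_of_pr2_eq (hE.comp hE') continuous_id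
    fun z => by simp [hEe (E' z), hEe' z]
  simp only [Function.comp, id] at hv hv'
  have hvv' : intVec v = intVec v' := by
    have h := hv (E' 0)
    rw [hv', hEeq'] at h
    exact (add_left_cancel h).symm
  let E₀ : R2 ≃ₜ R2 :=
    { toFun := E
      invFun := fun z => E' z + intVec (-v)
      left_inv := fun z => by simp only [hv, intVec_neg, add_neg_cancel_right]
      right_inv := fun z => (hEeq _ _).trans <| by
        rw [hv', intVec_neg, hvv', add_neg_cancel_right] }
  exact ⟨e.isHomeomorph, E, E₀.isHomeomorph, hEe, hEeq⟩

theorem isotopicToId_of_homotopic {e : T2 ≃ₜ T2}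
    (h : (ContinuousMap.id T2).Homotopic (e : C(T2, T2))) : IsotopicToId e := by
  have hsymm : (ContinuousMap.id T2).Homotopic (e.symm : C(T2, T2)) := by
    simpa using ((ContinuousMap.Homotopic.refl (e.symm : C(T2, T2))).comp h).symm
  exact isotopicToId_of_homotopicToIdMap (homotopicToIdMap_of_homotopic h)
    (homotopicToIdMap_of_homotopic hsymm)

end Homotopy

/-! ### Coincidences over a map homotopic to the identity -/

section Coincidence

variable {k h : T2 → T2} {G H : R2 → R2}

theorem IsotopicToId.exists_lift_comp_eq (hk : IsotopicToId k) (hH : Continuous H)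
    (hHh : IsLift H h) (hHe : Equivariant H) (hhk : h ∘ k = h) :
    ∃ G : R2 ≃ₜ R2, IsLift G k ∧ Equivariant G ∧ H ∘ G = H := by
  obtain ⟨-, K, hK, hKk, hKe⟩ := hk
  obtain ⟨v, hv⟩ := exists_eq_add_intVec_of_pr2_eq (hH.comp hK.continuous) hH fun z => by
    rw [hHh.comp hKk, hhk, hHh]
  refine ⟨hK.homeomorph.trans (Homeomorph.addRight (intVec (-v))), hKk.add_intVec (-v),
    hKe.add_intVec (-v), funext fun z => (hHe (K z) (-v)).trans ?_⟩
  rw [show H (K z) = _ from hv z, intVec_neg, add_neg_cancel_right]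

theorem mapClusterPt_iterate_lift (hGk : IsLift G k) (hH : Continuous H) (hHe : Equivariant H)
    (hHG : H ∘ G = H) {z : R2} (hz : MapClusterPt (pr2 z) atTop fun n => k^[n] (pr2 z)) :
    MapClusterPt z atTop fun n => G^[n] z := by
  refine mapClusterPt_iff_frequently.2 fun U hU => ?_
  have hnear : {u | dist (H u) (H z) < 1} ∈ 𝓝 z := hH.continuousAt (Metric.ball_mem_nhds _ one_pos)
  have himage := isOpenQuotientMap_pr2.isOpenMap.image_mem_nhds (inter_mem hU hnear)
  refine (mapClusterPt_iff_frequently.1 hz _ himage).mono fun n hn => ?_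
  obtain ⟨u, ⟨huU, hu⟩, hun⟩ := hn
  rw [← hGk.iterate, eq_comm, pr2_eq_pr2_iff] at hun
  obtain ⟨q, hq⟩ := hun
  have hHq : H z = H u + intVec q := by
    rw [← hHe, ← hq]
    exact (congrFun (Function.iterate_invariant hHG n) z).symm
  have hq₀ : intVec q = 0 := intVec_eq_zero_of_norm_lt_one <| by
    simpa [dist_eq_norm, hHq] using hu
  rwa [hq, hq₀, add_zero]

theorem IsotopicToId.exists_fixedPoint (hk : IsotopicToId k)
    (hm : MeasurePreserving k (volume : Measure T2) volume) (hh : HomotopicToIdMap h)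
    (hhk : h ∘ k = h) : ∃ x, k x = x := by
  obtain ⟨H, hH, hHh, hHe⟩ := hh
  obtain ⟨G, hGk, hGe, hHG⟩ := hk.exists_lift_comp_eq hH hHh hHe hhk
  obtain ⟨C, hC⟩ := hGe.exists_norm_sub_le G.continuous
  obtain ⟨x, hx⟩ := hm.conservative.ae_frequently_mem_of_mem_nhds.exists
  obtain ⟨z, rfl⟩ := surjective_pr2 x
  obtain ⟨y, hy⟩ := exists_fixedPoint_of_mapClusterPt_of_finrank_eq_two (by simp) hC
    (mapClusterPt_iterate_lift hGk hH hHe hHG (mapClusterPt_iff_frequently.2 hx))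
  exact ⟨pr2 y, by rw [← hGk, hy]⟩

theorem IsotopicToId.exists_coincidence {g g' : T2 → T2} (hg : IsotopicToId g)
    (hgm : MeasurePreserving g (volume : Measure T2) volume) (hg' : IsotopicToId g')
    (hgm' : MeasurePreserving g' (volume : Measure T2) volume) (hh : HomotopicToIdMap h)
    (hhg : h ∘ g = h ∘ g') : ∃ x, g x = g' x := by
  obtain ⟨e', rfl⟩ : ∃ e' : T2 ≃ₜ T2, ⇑e' = g' := ⟨hg'.1.homeomorph, rfl⟩
  have hsymm : MeasurePreserving e'.symm (volume : Measure T2) volume :=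
    MeasurePreserving.symm e'.toMeasurableEquiv hgm'
  obtain ⟨x, hx⟩ := (hg.comp hg'.symm).exists_fixedPoint (hgm.comp hsymm) hh <| by
    rw [← Function.comp_assoc, hhg, Function.comp_assoc, e'.self_comp_symm, Function.comp_id]
  exact ⟨e'.symm x, by rwa [e'.apply_symm_apply]⟩

end Coincidence

/-! ### Dynamics with a dense orbit -/

section DenseOrbit

theorem eq_of_semiconj_of_denseRange_iterate {X Y : Type*} [TopologicalSpace X]
    [TopologicalSpace Y] [T2Space Y] {f : X → X} {φ : Y → Y} {u v : X → Y} {x : X}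
    (hx : DenseRange fun n : ℕ => f^[n] x) (hu : Continuous u) (hv : Continuous v)
    (huf : Function.Semiconj u f φ) (hvf : Function.Semiconj v f φ) (huv : u x = v x) : u = v :=
  hx.equalizer hu hv <| funext fun n => by
    simp only [Function.comp, (huf.iterate_right n).eq, (hvf.iterate_right n).eq, huv]

theorem apply_eq_add_of_commute {X A : Type*} [TopologicalSpace X] [AddCommGroup A]
    [TopologicalSpace A] [ContinuousAdd A] [T2Space A] {f g : X → X} {h : X → A} {w : A} {x₀ : X}
    (hx₀ : DenseRange fun n : ℕ => f^[n] x₀) (hh : Continuous h) (hf : ∀ x, h (f x) = h x + w)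
    (hg : Continuous g) (hgf : Function.Commute g f) (x : X) :
    h (g x) = h x + (h (g x₀) - h x₀) :=
  congrFun (eq_of_semiconj_of_denseRange_iterate (φ := (· + w)) (u := h ∘ g)
    (v := fun x => h x + (h (g x₀) - h x₀)) hx₀ (hh.comp hg) (by fun_prop)
    (Function.Semiconj.comp_left (fun x => hf x) hgf)
    (fun x => by simp only [hf, add_right_comm]) (add_sub_cancel _ _).symm) x

theorem isClosed_setOf_measurePreserving {A X Y : Type*} [TopologicalSpace A]
    [FirstCountableTopology A] [MeasurableSpace X] [TopologicalSpace Y] [MeasurableSpace Y]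
    [BorelSpace Y] [HasOuterApproxClosed Y] {μ : Measure X} [IsFiniteMeasure μ] {ν : Measure Y}
    [IsFiniteMeasure ν] {F : A → X → Y} (hF : ∀ a, Measurable (F a))
    (hF' : ∀ x, Continuous fun a => F a x) : IsClosed {a | MeasurePreserving (F a) μ ν} := by
  have hiff (a : A) : MeasurePreserving (F a) μ ν ↔
      ∀ φ : BoundedContinuousFunction Y ℝ, ∫ x, φ (F a x) ∂μ = ∫ y, φ y ∂ν := by
    have hmap (φ : BoundedContinuousFunction Y ℝ) :
        ∫ y, φ y ∂(μ.map (F a)) = ∫ x, φ (F a x) ∂μ :=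
      integral_map (hF a).aemeasurable φ.continuous.measurable.aestronglyMeasurable
    refine ⟨fun h φ => by rw [← hmap, h.map_eq], fun h => ⟨hF a, ?_⟩⟩
    exact ext_of_forall_integral_eq_of_IsFiniteMeasure fun φ => (hmap φ).trans (h φ)
  simp only [hiff, Set.ofPred_forall]
  refine isClosed_iInter fun φ => isClosed_eq ?_ continuous_const
  exact continuous_of_dominated (bound := fun _ => ‖φ‖)
    (fun a => (φ.continuous.measurable.comp (hF a)).aestronglyMeasurable)
    (fun a => .of_forall fun x => φ.norm_coe_le_norm _) (integrable_const _)
    (.of_forall fun x => φ.continuous.comp (hF' x))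

end DenseOrbit

section ConjTranslation

variable {X A : Type*} [TopologicalSpace X] [AddGroup A] [TopologicalSpace A] [ContinuousAdd A]

/-- The translation by `a` of a topological group, transported to `X` by the homeomorphism `e`. -/
def conjTranslation (e : X ≃ₜ A) (a : A) : X ≃ₜ X :=
  (e.trans (Homeomorph.addRight a)).trans e.symm

theorem apply_conjTranslation (e : X ≃ₜ A) (a : A) (x : X) :
    e (conjTranslation e a x) = e x + a :=
  e.apply_symm_apply _

theorem continuous_conjTranslation_apply (e : X ≃ₜ A) {Y : Type*} [TopologicalSpace Y] {a : Y → A}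
    {x : Y → X} (ha : Continuous a) (hx : Continuous x) :
    Continuous fun y => conjTranslation e (a y) (x y) :=
  e.symm.continuous.comp ((e.continuous.comp hx).add ha)

theorem continuous_conjTranslation (e : X ≃ₜ A) :
    Continuous fun a => (conjTranslation e a : C(X, X)) :=
  ContinuousMap.continuous_of_continuous_uncurry _
    (continuous_conjTranslation_apply e continuous_fst continuous_snd)

theorem homotopic_id_conjTranslation (e : X ≃ₜ A) {a : A} (ha : Joined 0 a) :
    (ContinuousMap.id X).Homotopic (conjTranslation e a : C(X, X)) := by
  obtain ⟨γ⟩ := ha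
  have hγ : Continuous fun p : unitInterval × X => conjTranslation e (γ p.1) p.2 :=
    continuous_conjTranslation_apply e (γ.continuous.comp continuous_fst) continuous_snd
  have hzero (x : X) : conjTranslation e (γ 0) x = x :=
    e.injective (by rw [apply_conjTranslation, γ.source, add_zero])
  have hone (x : X) : conjTranslation e (γ 1) x = conjTranslation e a x := by rw [γ.target]
  exact ⟨⟨⟨_, hγ⟩, hzero, hone⟩⟩

theorem conjTranslation_nsmul (e : X ≃ₜ A) {f : X → X} {w : A} (hf : ∀ x, e (f x) = e x + w)
    (n : ℕ) : ⇑(conjTranslation e (n • w)) = f^[n] := by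
  funext x
  have hiter : e (f^[n] x) = (· + w)^[n] (e x) :=
    Function.Semiconj.iterate_right (f := e) (gb := (· + w)) (fun x => hf x) n x
  exact e.injective (by rw [apply_conjTranslation, hiter, add_right_iterate])

theorem measurePreserving_conjTranslation [FirstCountableTopology A] [MeasurableSpace X]
    [BorelSpace X] [HasOuterApproxClosed X] {μ : Measure X} [IsFiniteMeasure μ] (e : X ≃ₜ A)
    {f : X → X} {w : A} (hf : ∀ x, e (f x) = e x + w) (hμ : MeasurePreserving f μ μ)
    (hdense : DenseRange fun n : ℕ => f^[n] (e.symm 0)) (a : A) :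
    MeasurePreserving (conjTranslation e a) μ μ := by
  have horbit (n : ℕ) : e (f^[n] (e.symm 0)) = n • w := by
    rw [← conjTranslation_nsmul e hf, apply_conjTranslation, e.apply_symm_apply, zero_add]
  have hdense' : DenseRange fun n : ℕ => n • w := by
    simpa only [Function.comp_def, horbit] using e.surjective.denseRange.comp hdense e.continuous
  refine hdense'.induction_on (p := fun a => MeasurePreserving (conjTranslation e a) μ μ) a
    (isClosed_setOf_measurePreserving (fun a => (conjTranslation e a).measurable)
      fun x => continuous_conjTranslation_apply e continuous_id continuous_const) fun n => ?_
  rw [conjTranslation_nsmul e hf]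
  exact hμ.iterate n

end ConjTranslation

/-! ### The centralizer -/

/-- The group `G⁰_f` of centralizers of `f` in `Homeo(𝕋², Vol) ∩ Homeo_*(𝕋²)`, as a subset of
`C(𝕋², 𝕋²)` so that it carries the `C⁰` topology. -/
def volCentralizer (f : T2 → T2) : Set C(T2, T2) :=
  {g | IsHomeomorph g ∧ IsotopicToId g ∧ MeasurePreserving g (volume : Measure T2) volume ∧
    g ∘ f = f ∘ g}

section VolCentralizer

variable {f h : T2 → T2} {w : T2} {g g' : C(T2, T2)}

theorem commute_of_mem_volCentralizer (hg : g ∈ volCentralizer f) : Function.Commute g f :=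
  congrFun hg.2.2.2

theorem comp_mem_volCentralizer (hg : g ∈ volCentralizer f) (hg' : g' ∈ volCentralizer f) :
    g.comp g' ∈ volCentralizer f :=
  ⟨hg.1.comp hg'.1, hg.2.1.comp hg'.2.1, hg.2.2.1.comp hg'.2.2.1,
    ((commute_of_mem_volCentralizer hg).comp_left (commute_of_mem_volCentralizer hg')).comp_eq⟩

theorem iterate_mem_volCentralizer (hiso : IsotopicToId f)
    (hmp : MeasurePreserving f (volume : Measure T2) volume) (n : ℕ) :
    (⟨f^[n], hiso.1.continuous.iterate n⟩ : C(T2, T2)) ∈ volCentralizer f := by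
  induction n with
  | zero => exact ⟨.id, .id, .id _, rfl⟩
  | succ n ih =>
    have hf : (⟨f, hiso.1.continuous⟩ : C(T2, T2)) ∈ volCentralizer f := ⟨hiso.1, hiso, hmp, rfl⟩
    exact comp_mem_volCentralizer ih hf

theorem eq_of_mem_volCentralizer (hmin : MinimalMap f) (hg : g ∈ volCentralizer f)
    (hg' : g' ∈ volCentralizer f) {x : T2} (hx : g x = g' x) : g = g' :=
  DFunLike.coe_injective <| eq_of_semiconj_of_denseRange_iterate (hmin x) g.continuous
    g'.continuous (commute_of_mem_volCentralizer hg) (commute_of_mem_volCentralizer hg') hx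

theorem injOn_volCentralizer (hmin : MinimalMap f) (hh : HomotopicToIdMap h) (hc : Continuous h)
    (hf : ∀ x, h (f x) = h x + w) (x₀ : T2) :
    Set.InjOn (fun g : C(T2, T2) => h (g x₀)) (volCentralizer f) := by
  intro g hg g' hg' hgg'
  have hcomp (x : T2) : h (g x) = h (g' x) := by
    rw [apply_eq_add_of_commute (hmin x₀) hc hf g.continuous (commute_of_mem_volCentralizer hg),
      apply_eq_add_of_commute (hmin x₀) hc hf g'.continuous (commute_of_mem_volCentralizer hg'),
      show h (g x₀) = h (g' x₀) from hgg']
  obtain ⟨x, hx⟩ :=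
    hg.2.1.exists_coincidence hg.2.2.1 hg'.2.1 hg'.2.2.1 hh (funext hcomp)
  exact eq_of_mem_volCentralizer hmin hg hg' hx

theorem exists_mem_volCentralizer_apply_eq (hiso : IsotopicToId f)
    (hmp : MeasurePreserving f (volume : Measure T2) volume) (hmin : MinimalMap f)
    (hK : IsCompact (volCentralizer f)) (x₀ x : T2) : ∃ g ∈ volCentralizer f, g x₀ = x := by
  have hclosed : IsClosed ((fun g : C(T2, T2) => g x₀) '' volCentralizer f) :=
    (hK.image (continuous_eval_const x₀)).isClosed
  have hmem (n : ℕ) : f^[n] x₀ ∈ (fun g : C(T2, T2) => g x₀) '' volCentralizer f :=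
    ⟨_, iterate_mem_volCentralizer hiso hmp n, rfl⟩
  exact DenseRange.induction_on (hmin x₀) x hclosed hmem

theorem topLinearizable_of_isCompact_volCentralizer (hiso : IsotopicToId f)
    (hmp : MeasurePreserving f (volume : Measure T2) volume) (hmin : MinimalMap f)
    (hsc : RegSemiConj f w) (hK : IsCompact (volCentralizer f)) : TopLinearizable f := by
  obtain ⟨h, hc, hsurj, hh, hf⟩ := hsc
  have hinj : Function.Injective h := by
    intro x y hxy
    obtain ⟨g, hg, rfl⟩ := exists_mem_volCentralizer_apply_eq hiso hmp hmin hK 0 x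
    obtain ⟨g', hg', rfl⟩ := exists_mem_volCentralizer_apply_eq hiso hmp hmin hK 0 y
    rw [injOn_volCentralizer hmin hh hc hf 0 hg hg' hxy]
  exact ⟨w, h, isHomeomorph_iff_continuous_bijective.2 ⟨hc, hinj, hsurj⟩, hf⟩

theorem volCentralizer_eq_range_conjTranslation
    (hmp : MeasurePreserving f (volume : Measure T2) volume) (hmin : MinimalMap f) (e : T2 ≃ₜ T2)
    (hf : ∀ x, e (f x) = e x + w) :
    volCentralizer f = Set.range fun a => (conjTranslation e a : C(T2, T2)) := by
  refine Set.Subset.antisymm (fun g hg => ⟨e (g 0) - e 0, ?_⟩) ?_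
  · ext1 x
    refine e.injective ((apply_conjTranslation e _ x).trans ?_)
    exact (apply_eq_add_of_commute (hmin 0) e.continuous hf g.continuous
      (commute_of_mem_volCentralizer hg) x).symm
  · rintro _ ⟨a, rfl⟩
    refine ⟨(conjTranslation e a).isHomeomorph,
      isotopicToId_of_homotopic (homotopic_id_conjTranslation e (PathConnectedSpace.joined 0 a)),
      measurePreserving_conjTranslation e hf hmp (hmin _) a, funext fun x => e.injective ?_⟩
    change e (conjTranslation e a (f x)) = e (f (conjTranslation e a x))
    rw [apply_conjTranslation, hf, hf, apply_conjTranslation, add_right_comm]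

theorem isCompact_volCentralizer_of_topLinearizable
    (hmp : MeasurePreserving f (volume : Measure T2) volume) (hmin : MinimalMap f)
    (hlin : TopLinearizable f) : IsCompact (volCentralizer f) := by
  obtain ⟨w, h, hh, hf⟩ := hlin
  rw [volCentralizer_eq_range_conjTranslation hmp hmin hh.homeomorph hf]
  exact isCompact_range (continuous_conjTranslation _)

end VolCentralizer

/-- **Theorem 1.5.** Let f be a minimal volume-preserving homeomorphism of 𝕋², isotopic to the
identity, regularly semi-conjugate to the translation T_ω̄ with ω̄ totally irrational, and let
G⁰_f be its centralizers in Homeo(𝕋², Vol) ∩ Homeo_*(𝕋²). Then G⁰_f is isomorphic to a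
subgroup of ℝ²/ℤ², and G⁰_f is C⁰-compact iff f is topologically linearizable. -/
theorem centralizers_of_minimal_semi_conjugate_pseudo_rotation
    (f : T2 → T2) (ω : R2) (w : T2)
    (hw : pr2 ω = w)
    (hti : TotallyIrrationalVec ω)
    (hiso : IsotopicToId f)
    (hmp : MeasurePreserving f (volume : Measure T2) volume)
    (hmin : MinimalMap f)
    (hsc : RegSemiConj f w)
    (GF : Set C(T2, T2))
    (hGF : GF = {g : C(T2, T2) | IsHomeomorph ⇑g ∧ IsotopicToId ⇑g ∧
      MeasurePreserving ⇑g (volume : Measure T2) volume ∧ ⇑g ∘ f = f ∘ ⇑g}) :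
    (∃ Φ : C(T2, T2) → T2,
        Set.InjOn Φ GF ∧
        (∀ g ∈ GF, ∀ g' ∈ GF, g.comp g' ∈ GF ∧ Φ (g.comp g') = Φ g + Φ g')) ∧
      (IsCompact GF ↔ TopLinearizable f) := by
  subst hGF
  change (∃ Φ : C(T2, T2) → T2, Set.InjOn Φ (volCentralizer f) ∧ _) ∧ _
  obtain ⟨h, hc, hsurj, hh, hf⟩ := hsc
  refine ⟨⟨fun g => h (g 0) - h 0, fun g hg g' hg' hgg' => ?_, fun g hg g' hg' => ⟨?_, ?_⟩⟩,
    topLinearizable_of_isCompact_volCentralizer hiso hmp hmin ⟨h, hc, hsurj, hh, hf⟩,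
    isCompact_volCentralizer_of_topLinearizable hmp hmin⟩
  · exact injOn_volCentralizer hmin hh hc hf 0 hg hg' (sub_left_injective hgg')
  · exact comp_mem_volCentralizer hg hg'
  · have hadd := apply_eq_add_of_commute (hmin 0) hc hf g.continuous
      (commute_of_mem_volCentralizer hg) (g' 0)
    simp only [ContinuousMap.comp_apply, hadd]
    abel
end
end

section
/- Let ω = (ω₁,ω₂) ∈ ℝ² be semi-irrational. Then: (i) the data (c,d) ∈ ℤ²∖{(0,0)} with gcd(c,d)=1 and e ∈ ℚ satisfying cω₁+dω₂+e=0 is unique up to simultaneous change of sign; in particular the set of character vectors {±(d,−c)} and the character number q (the positive denominator of e in lowest terms) are uniquely determined by ω, and they depend only on ω mod ℤ²; (ii) given a character vector v = (d,−c), the value α mod ℤ, where α = q(aω₁+bω₂) for any a,b ∈ ℤ with [[a,b],[c,d]] ∈ SL(2,ℤ), is independent of the choice of a,b; (iii) the character frequency 𝓕(ω̄) := ‖α‖_𝕋 is independent of the choice of character vector, and α ∉ ℚ. -/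
open Filter Topology MeasureTheory

noncomputable section

/-!
Two rational relations `a ω₁ + b ω₂ ∈ ℚ`, `c ω₁ + d ω₂ ∈ ℚ` with nonzero determinant can be solved
for `ω`, which would make `ω` rational. Hence any two relations satisfied by an irrational `ω` are
proportional, so equal up to sign once their coefficients are coprime; and since `c ω₁ + d ω₂ ∈ ℚ`,
no row `(a, b)` independent of `(c, d)` can have `a ω₁ + b ω₂ ∈ ℚ`, so `α ∉ ℚ`. Two completions of
`(c, d)` to a matrix in `SL(2, ℤ)` differ by `m (c, d)`, which changes `α` by
`m q (c ω₁ + d ω₂) = -m p ∈ ℤ`, and a change of sign of `(c, d)` changes `α mod ℤ` to `-α`.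
-/

section CommRing

variable {R : Type*} [CommRing R] {a b a' b' c d c' d' : R}

theorem exists_unit_mul_eq_of_isCoprime_of_mul_eq_mul (h : IsCoprime c d) (h' : IsCoprime c' d')
    (hdet : c * d' = d * c') : ∃ u : Rˣ, c' = u * c ∧ d' = u * d := by
  obtain ⟨x, y, hxy⟩ := h
  have hc : c' = (c' * x + d' * y) * c := by linear_combination -c' * hxy - y * hdet
  have hd : d' = (c' * x + d' * y) * d := by linear_combination -d' * hxy + x * hdet
  obtain ⟨u, hu⟩ := h'.isUnit_of_dvd' (Dvd.intro _ hc.symm) (Dvd.intro _ hd.symm)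
  exact ⟨u, hu ▸ hc, hu ▸ hd⟩

theorem exists_eq_add_mul_of_det_eq_one (h : a * d - b * c = 1) (h' : a' * d - b' * c = 1) :
    ∃ m : R, a = a' + m * c ∧ b = b' + m * d :=
  ⟨a' * b - a * b', by linear_combination a' * h - a * h', by linear_combination b' * h - b * h'⟩

end CommRing

theorem dT_eq_norm (x : ℝ) : dT x = ‖(x : UnitAddCircle)‖ :=
  UnitAddCircle.norm_eq.symm

theorem dT_neg (x : ℝ) : dT (-x) = dT x := by
  rw [dT_eq_norm, dT_eq_norm, AddCircle.coe_neg, norm_neg]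

theorem dT_add_intCast (x : ℝ) (m : ℤ) : dT (x + m) = dT x := by
  simp only [dT, round_add_intCast, Int.cast_add, add_sub_add_right_eq_sub]

namespace IrrationalVec

variable {ω : R2}

theorem det_eq_zero (hω : IrrationalVec ω) {a b c d r s : ℚ}
    (hr : a * ω.1 + b * ω.2 = r) (hs : c * ω.1 + d * ω.2 = s) : a * d - b * c = 0 := by
  by_contra hdet
  have hdet' : (a * d - b * c : ℝ) ≠ 0 := mod_cast hdet
  refine hω ⟨((d * r - b * s) / (a * d - b * c), (a * s - c * r) / (a * d - b * c)),
    Prod.ext ?_ ?_⟩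
  · push_cast
    rw [eq_div_iff hdet']
    linear_combination (d : ℝ) * hr - b * hs
  · push_cast
    rw [eq_div_iff hdet']
    linear_combination (a : ℝ) * hs - c * hr

theorem relation_eq_or_eq_neg (hω : IrrationalVec ω) {c d c' d' : ℤ} {e e' : ℚ}
    (hcd : IsCoprime c d) (hcd' : IsCoprime c' d')
    (h : c * ω.1 + d * ω.2 + e = 0) (h' : c' * ω.1 + d' * ω.2 + e' = 0) :
    (c' = c ∧ d' = d ∧ e' = e) ∨ (c' = -c ∧ d' = -d ∧ e' = -e) := by
  have hdet : (c : ℚ) * d' - d * c' = 0 :=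
    hω.det_eq_zero (r := -e) (s := -e') (by push_cast; linarith) (by push_cast; linarith)
  have hcross : c * d' = d * c' := by exact_mod_cast sub_eq_zero.mp hdet
  obtain ⟨u, rfl, rfl⟩ := exists_unit_mul_eq_of_isCoprime_of_mul_eq_mul hcd hcd' hcross
  have he : e' = (u : ℤ) * e := by
    push_cast at h'
    have heR : (e' : ℝ) = (u : ℤ) * e := by linear_combination h' - (u : ℤ) * h
    exact_mod_cast heR
  subst he
  obtain rfl | rfl := Int.units_eq_one_or u <;> simp

end IrrationalVec

theorem isCharacterVector_add_intVec_iff {ω v : R2} (k : ℤ × ℤ) :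
    IsCharacterVector (ω + intVec k) v ↔ IsCharacterVector ω v := by
  refine exists₂_congr fun c d => and_congr_right' (and_congr_left'
    ((Equiv.addRight (c * k.1 + d * k.2 : ℚ)).exists_congr fun e => Eq.congr_left ?_))
  simp only [intVec, Prod.fst_add, Prod.snd_add, Equiv.coe_addRight]
  push_cast
  ring

theorem isCharData_add_intVec_iff {ω : R2} {c d p q : ℤ} (k : ℤ × ℤ) :
    IsCharData (ω + intVec k) c d p q ↔
      IsCharData ω c d (p + q * (c * k.1 + d * k.2)) q := by
  refine and_congr_right' (and_congr (by rw [Int.gcd_add_mul_left_left])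
    (and_congr_right fun hq => Eq.congr_left ?_))
  have hq' : (q : ℝ) ≠ 0 := mod_cast hq.ne'
  simp only [intVec, Prod.fst_add, Prod.snd_add]
  push_cast
  field_simp
  ring

/-- The paper's `α = q (a ω₁ + b ω₂)`, as a real number rather than modulo `ℤ`. The character
frequency is `dT` of this number when `q` is the character number of `ω` and `(a, b)` completes
its character data `(c, d)` to a matrix in `SL(2, ℤ)`. -/
def characterAngle (ω : R2) (q a b : ℤ) : ℝ :=
  q * (a * ω.1 + b * ω.2)

theorem characterAngle_neg (ω : R2) (q a b : ℤ) :
    characterAngle ω q (-a) (-b) = -characterAngle ω q a b := by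
  simp only [characterAngle]
  push_cast
  ring

namespace IsCharData

variable {ω : R2} {c d p q a b c' d' p' q' a' b' : ℤ}

theorem eq_or_eq_neg (hω : IrrationalVec ω) (h : IsCharData ω c d p q)
    (h' : IsCharData ω c' d' p' q') :
    (c' = c ∧ d' = d ∧ p' = p ∧ q' = q) ∨ (c' = -c ∧ d' = -d ∧ p' = -p ∧ q' = q) := by
  obtain ⟨hcd, hpq, hq, he⟩ := h
  obtain ⟨hcd', hpq', hq', he'⟩ := h'
  obtain ⟨hc, hd, he⟩ | ⟨hc, hd, he⟩ := hω.relation_eq_or_eq_neg (e := p / q) (e' := p' / q')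
    (Int.isCoprime_iff_gcd_eq_one.mpr hcd) (Int.isCoprime_iff_gcd_eq_one.mpr hcd')
    (mod_cast he) (mod_cast he')
  · exact .inl ⟨hc, hd, Rat.div_int_inj hq' hq hpq' hpq he⟩
  · have hpq_neg : Nat.Coprime (-p).natAbs q.natAbs := by rwa [Int.natAbs_neg]
    rw [← neg_div, ← Int.cast_neg] at he
    exact .inr ⟨hc, hd, Rat.div_int_inj hq' hq hpq' hpq_neg he⟩

theorem charNumber_unique (hω : IrrationalVec ω) (h : IsCharData ω c d p q)
    (h' : IsCharData ω c' d' p' q') : q' = q := by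
  obtain ⟨-, -, -, hq⟩ | ⟨-, -, -, hq⟩ := h.eq_or_eq_neg hω h' <;> exact hq

theorem mul_add_mul_eq_neg (h : IsCharData ω c d p q) : q * (c * ω.1 + d * ω.2) = -p := by
  obtain ⟨-, -, hq, he⟩ := h
  have hq' : (q : ℝ) ≠ 0 := mod_cast hq.ne'
  rw [eq_neg_of_add_eq_zero_left he, mul_neg, mul_div_cancel₀ _ hq']

theorem characterAngle_add_mul (h : IsCharData ω c d p q) (a b m : ℤ) :
    characterAngle ω q (a + m * c) (b + m * d) = characterAngle ω q a b + (-(m * p) : ℤ) := by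
  simp only [characterAngle]
  push_cast
  linear_combination (m : ℝ) * h.mul_add_mul_eq_neg

theorem exists_characterAngle_eq_add_intCast (h : IsCharData ω c d p q)
    (hdet : a * d - b * c = 1) (hdet' : a' * d - b' * c = 1) :
    ∃ m : ℤ, characterAngle ω q a b = characterAngle ω q a' b' + m := by
  obtain ⟨m, rfl, rfl⟩ := exists_eq_add_mul_of_det_eq_one hdet hdet'
  exact ⟨_, h.characterAngle_add_mul a' b' m⟩

theorem dT_characterAngle_eq_of_det_eq_one (h : IsCharData ω c d p q)
    (hdet : a * d - b * c = 1) (hdet' : a' * d - b' * c = 1) :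
    dT (characterAngle ω q a b) = dT (characterAngle ω q a' b') := by
  obtain ⟨m, hm⟩ := h.exists_characterAngle_eq_add_intCast hdet hdet'
  rw [hm, dT_add_intCast]

theorem dT_characterAngle_unique (hω : IrrationalVec ω) (h : IsCharData ω c d p q)
    (h' : IsCharData ω c' d' p' q') (hdet : a * d - b * c = 1) (hdet' : a' * d' - b' * c' = 1) :
    dT (characterAngle ω q a b) = dT (characterAngle ω q' a' b') := by
  obtain ⟨rfl, rfl, rfl, rfl⟩ | ⟨rfl, rfl, rfl, rfl⟩ := h.eq_or_eq_neg hω h'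
  · exact h.dT_characterAngle_eq_of_det_eq_one hdet hdet'
  · have hdet_neg : -a' * d - -b' * c = 1 := by linarith
    rw [h.dT_characterAngle_eq_of_det_eq_one hdet hdet_neg, characterAngle_neg, dT_neg]

theorem irrational_characterAngle (hω : IrrationalVec ω) (h : IsCharData ω c d p q)
    (hdet : a * d - b * c ≠ 0) : Irrational (characterAngle ω q a b) := by
  rintro ⟨r, hr⟩
  have hq : q ≠ 0 := h.2.2.1.ne'
  have hα : ((q * a : ℚ) : ℝ) * ω.1 + ((q * b : ℚ) : ℝ) * ω.2 = r := by
    rw [hr, characterAngle]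
    push_cast
    ring
  have hrel : ((c : ℚ) : ℝ) * ω.1 + ((d : ℚ) : ℝ) * ω.2 = (-(p / q) : ℚ) := by
    push_cast
    exact eq_neg_of_add_eq_zero_left h.2.2.2
  have hzero : (q * (a * d - b * c) : ℚ) = 0 := by
    linear_combination hω.det_eq_zero hα hrel
  exact mul_ne_zero hq hdet (mod_cast hzero)

end IsCharData

/-- **Section 2.3.** For a semi-irrational ω ∈ ℝ²: (i) the data (c,d,e) with gcd(c,d)=1 and
c ω₁ + d ω₂ + e = 0 is unique up to sign; the character vectors and the character number only
depend on ω mod ℤ²; (ii) given a character vector, α mod ℤ does not depend on the completion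
(a,b) to a matrix in SL(2,ℤ); (iii) the character frequency ‖α‖_𝕋 does not depend on any of
the choices, and α is irrational. -/
theorem character_data_of_semi_irrational_vector
    (ω : R2) (hsemi : SemiIrrationalVec ω) :
    (∀ c d c' d' : ℤ, ∀ e e' : ℚ, Int.gcd c d = 1 → Int.gcd c' d' = 1 →
        (c : ℝ) * ω.1 + (d : ℝ) * ω.2 + (e : ℝ) = 0 →
        (c' : ℝ) * ω.1 + (d' : ℝ) * ω.2 + (e' : ℝ) = 0 →
        (c' = c ∧ d' = d ∧ e' = e) ∨ (c' = -c ∧ d' = -d ∧ e' = -e)) ∧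
    (∀ k : ℤ × ℤ, ∀ v : R2, IsCharacterVector ω v ↔ IsCharacterVector (ω + intVec k) v) ∧
    (∀ k : ℤ × ℤ, ∀ c d p q c' d' p' q' : ℤ, IsCharData ω c d p q →
        IsCharData (ω + intVec k) c' d' p' q' → q' = q) ∧
    (∀ c d p q a b a' b' : ℤ, IsCharData ω c d p q → a * d - b * c = 1 → a' * d - b' * c = 1 →
        ∃ m : ℤ, (q : ℝ) * ((a : ℝ) * ω.1 + (b : ℝ) * ω.2)
            - (q : ℝ) * ((a' : ℝ) * ω.1 + (b' : ℝ) * ω.2) = (m : ℝ)) ∧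
    (∀ c d p q a b c' d' p' q' a' b' : ℤ, IsCharData ω c d p q → IsCharData ω c' d' p' q' →
        a * d - b * c = 1 → a' * d' - b' * c' = 1 →
        dT ((q : ℝ) * ((a : ℝ) * ω.1 + (b : ℝ) * ω.2)) =
          dT ((q' : ℝ) * ((a' : ℝ) * ω.1 + (b' : ℝ) * ω.2))) ∧
    (∀ c d p q a b : ℤ, IsCharData ω c d p q → a * d - b * c = 1 →
        Irrational ((q : ℝ) * ((a : ℝ) * ω.1 + (b : ℝ) * ω.2))) := by
  obtain ⟨hω, -⟩ := hsemi
  refine ⟨?_, ?_, ?_, ?_, ?_, ?_⟩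
  · intro c d c' d' e e' hcd hcd'
    rw [← Int.isCoprime_iff_gcd_eq_one] at hcd hcd'
    exact hω.relation_eq_or_eq_neg hcd hcd'
  · exact fun k v => (isCharacterVector_add_intVec_iff k).symm
  · intro k c d p q c' d' p' q' h h'
    exact h.charNumber_unique hω ((isCharData_add_intVec_iff k).mp h')
  · intro c d p q a b a' b' h hdet hdet'
    obtain ⟨m, hm⟩ := h.exists_characterAngle_eq_add_intCast hdet hdet'
    exact ⟨m, sub_eq_of_eq_add' hm⟩
  · intro c d p q a b c' d' p' q' a' b' h h' hdet hdet'
    exact h.dT_characterAngle_unique hω h' hdet hdet'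
  · intro c d p q a b h hdet
    exact h.irrational_characterAngle hω (hdet ▸ one_ne_zero)
end
end
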